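/- arXiv:2012.15319 — 3 statements merged into one kernel-verified Lean document; each statement's English description precedes it below -/
import Mathlib

section
/- Let p and ℓ be odd primes and q = p^e a power of p with q ≡ 1 (mod ℓ). For a nonzero polynomial f ∈ 𝔽_q[t], let ω(f) denote the number of distinct monic irreducible factors of f. Then there exists a real constant c > 0 such that the quantity (∑_{f} (ℓ−1)^{ω(f)}) / (q^d · d^{ℓ−2}), where the sum ranges over all monic squarefree polynomials f ∈ 𝔽_q[t] of degree d, tends to c as d → ∞. -/
open Polynomial Filter

/-!
Put `m = ℓ - 1` and `t_P = q ^ (-deg P) X ^ deg P` for each monic irreducible `P`. The generating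
series of the sums in question, normalised by `q ^ (-deg f)`, is the Euler product
`A = ∏ P, (1 + m t_P)`, and Möbius inversion over all monic polynomials gives
`∏ P, (1 - t_P) = 1 - X`. Hence `(1 - X) ^ m A = ∏ P, (1 + m t_P) (1 - t_P) ^ m`, whose factors are
`1 + O(t_P ^ 2)`. As `∑ ‖t_P‖ ^ 2` converges, so does the product, in the Banach algebra of power
series with absolutely summable coefficients; call it `G`. The coefficients of `A` are those of `G`
convolved with the binomial coefficients of `(1 - X) ^ (-m)`, so dominated convergence shows that
they are asymptotic to `G(1) n ^ (m - 1) / (m - 1)!`, and `G(1)` is a convergent product of positive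
numbers.
-/

noncomputable section

open scoped PowerSeries Topology

section PowerSeries

theorem mk_pow_mul_one_sub_C_mul_X {S : Type*} [CommRing S] (a : S) :
    PowerSeries.mk (fun n => a ^ n) * (1 - PowerSeries.C a * PowerSeries.X) = 1 := by
  simpa [PowerSeries.rescale_mk] using
    congrArg (PowerSeries.rescale a) (PowerSeries.mk_one_mul_one_sub_eq_one S)

theorem tendsto_sum_antidiagonal_mul_div {a b w : ℕ → ℝ} {C L : ℝ} (ha : Summable fun n => ‖a n‖)
    (hb : ∀ k, Tendsto (fun n => b (n - k) / w n) atTop (𝓝 L))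
    (hC : ∀ᶠ n in atTop, ∀ k ≤ n, ‖b k / w n‖ ≤ C) :
    Tendsto (fun n => (∑ k ∈ Finset.HasAntidiagonal.antidiagonal n, a k.1 * b k.2) / w n) atTop
      (𝓝 ((∑' k, a k) * L)) := by
  have hterm (k : ℕ) : Tendsto
      (fun n => (Finset.range (n + 1) : Set ℕ).indicator (fun k => a k * (b (n - k) / w n)) k)
      atTop (𝓝 (a k * L)) := by
    refine ((hb k).const_mul (a k)).congr' ?_
    filter_upwards [eventually_ge_atTop k] with n hn
    rw [Set.indicator_of_mem (by simpa using Nat.lt_succ_of_le hn)]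
  rw [← tsum_mul_right]
  refine (tendsto_tsum_of_dominated_convergence (ha.mul_right |C|) hterm ?_).congr fun n => ?_
  · filter_upwards [hC] with n hn k
    refine (norm_indicator_le_norm_self _ _).trans ?_
    rw [norm_mul]
    exact mul_le_mul_of_nonneg_left ((hn _ (n.sub_le k)).trans (le_abs_self C)) (norm_nonneg _)
  · rw [tsum_eq_sum (s := Finset.range (n + 1)) fun k hk => Set.indicator_of_notMem hk _,
      Finset.sum_div, Finset.Nat.sum_antidiagonal_eq_sum_range_succ_mk]
    refine Finset.sum_congr rfl fun k hk => ?_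
    rw [Set.indicator_of_mem (Finset.mem_coe.mpr hk), mul_div_assoc]

theorem tendsto_add_choose_sub_div_pow (r k : ℕ) :
    Tendsto (fun n : ℕ => ((r + (n - k)).choose r : ℝ) / (n : ℝ) ^ r) atTop
      (𝓝 (1 / r.factorial)) := by
  have hN : Tendsto (fun n : ℕ => r + (n - k)) atTop atTop :=
    tendsto_atTop_mono (fun n => Nat.le_add_left _ r) (tendsto_sub_atTop_nat k)
  have hratio : Tendsto (fun n : ℕ => ((r + (n - k) : ℕ) : ℝ) / n) atTop (𝓝 1) := by
    have hlim := (tendsto_inv_atTop_nhds_zero_nat (𝕜 := ℝ)).const_mul ((r : ℝ) - k)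
    have hlim1 := hlim.const_add 1
    rw [mul_zero, add_zero] at hlim1
    refine hlim1.congr' ?_
    filter_upwards [eventually_gt_atTop 0, eventually_ge_atTop k] with n hn hk
    push_cast [Nat.cast_sub hk]
    field_simp
    ring
  have hequiv := (isEquivalent_choose r).comp_tendsto hN
  refine (hequiv.div (.refl (u := fun n : ℕ => (n : ℝ) ^ r))).symm.tendsto_nhds ?_
  have hpow := (hratio.pow r).div_const (r.factorial : ℝ)
  rw [one_pow] at hpow
  refine hpow.congr fun n => ?_
  simp only [Pi.div_apply, Function.comp_apply, div_pow]
  ring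

theorem norm_add_choose_div_pow_le {r k n : ℕ} (hn : 0 < n) (hk : k ≤ n) :
    ‖((r + k).choose r : ℝ) / (n : ℝ) ^ r‖ ≤ (r + 1 : ℝ) ^ r := by
  rw [Real.norm_of_nonneg (by positivity), div_le_iff₀ (by positivity), ← mul_pow]
  have hle : r + k ≤ (r + 1) * n := by nlinarith
  exact_mod_cast (Nat.choose_le_pow _ _).trans (Nat.pow_le_pow_left hle r)

theorem tendsto_coeff_div_pow_of_mul_one_sub_X_pow {r : ℕ} {A G : ℝ⟦X⟧}
    (hG : Summable fun n => ‖PowerSeries.coeff n G‖) (hA : A * (1 - PowerSeries.X) ^ (r + 1) = G) :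
    Tendsto (fun n => PowerSeries.coeff n A / (n : ℝ) ^ r) atTop
      (𝓝 ((∑' n, PowerSeries.coeff n G) / r.factorial)) := by
  have hAG : A = G * PowerSeries.mk fun n => ((r + n).choose r : ℝ) := by
    have hinv := PowerSeries.mk_add_choose_mul_one_sub_pow_eq_one ℝ r
    linear_combination (-A) * hinv + (PowerSeries.mk fun n => ((r + n).choose r : ℝ)) * hA
  simp only [hAG, PowerSeries.coeff_mul, PowerSeries.coeff_mk]
  rw [div_eq_mul_one_div]
  refine tendsto_sum_antidiagonal_mul_div (b := fun n => ((r + n).choose r : ℝ))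
    (w := fun n => (n : ℝ) ^ r) (C := (r + 1 : ℝ) ^ r) hG (tendsto_add_choose_sub_div_pow r) ?_
  filter_upwards [eventually_gt_atTop 0] with n hn k hk using norm_add_choose_div_pow_le hn hk

end PowerSeries

section InfiniteProducts

variable {R : Type*} [NormedCommRing R]

variable (R) in
theorem exists_norm_one_sub_pow_sub_le (m : ℕ) :
    ∃ C : ℝ, ∀ t : R, ‖t‖ ≤ 1 → ‖(1 - t) ^ m - (1 - m * t)‖ ≤ C * ‖t‖ ^ 2 := by
  induction m with
  | zero => exact ⟨0, fun t _ => by simp⟩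
  | succ m ih =>
    obtain ⟨C, hC⟩ := ih
    refine ⟨C * (‖(1 : R)‖ + 1) + ‖(m : R)‖, fun t ht => ?_⟩
    have hsub : ‖1 - t‖ ≤ ‖(1 : R)‖ + 1 := (norm_sub_le _ _).trans (by gcongr)
    calc ‖(1 - t) ^ (m + 1) - (1 - (m + 1 : ℕ) * t)‖
        = ‖((1 - t) ^ m - (1 - m * t)) * (1 - t) + m * t ^ 2‖ := by push_cast; ring_nf
      _ ≤ ‖(1 - t) ^ m - (1 - m * t)‖ * ‖1 - t‖ + ‖(m : R)‖ * ‖t‖ ^ 2 :=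
          norm_add_le_of_le (norm_mul_le _ _) (norm_mul_le_of_le le_rfl (norm_pow_le' t two_pos))
      _ ≤ C * ‖t‖ ^ 2 * (‖(1 : R)‖ + 1) + ‖(m : R)‖ * ‖t‖ ^ 2 := by
          gcongr
          · exact (norm_nonneg _).trans (hC t ht)
          · exact hC t ht
      _ = (C * (‖(1 : R)‖ + 1) + ‖(m : R)‖) * ‖t‖ ^ 2 := by ring

variable (R) in
theorem exists_norm_one_add_mul_one_sub_pow_sub_one_le (m : ℕ) :
    ∃ C : ℝ, ∀ t : R, ‖t‖ ≤ 1 → ‖(1 + m * t) * (1 - t) ^ m - 1‖ ≤ C * ‖t‖ ^ 2 := by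
  obtain ⟨C, hC⟩ := exists_norm_one_sub_pow_sub_le R m
  refine ⟨(‖(1 : R)‖ + ‖(m : R)‖) * C + ‖(m : R) ^ 2‖, fun t ht => ?_⟩
  have hadd : ‖1 + m * t‖ ≤ ‖(1 : R)‖ + ‖(m : R)‖ :=
    norm_add_le_of_le le_rfl ((norm_mul_le _ _).trans (mul_le_of_le_one_right (norm_nonneg _) ht))
  calc ‖(1 + m * t) * (1 - t) ^ m - 1‖
      = ‖(1 + m * t) * ((1 - t) ^ m - (1 - m * t)) - m ^ 2 * t ^ 2‖ := by ring_nf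
    _ ≤ ‖1 + m * t‖ * ‖(1 - t) ^ m - (1 - m * t)‖ + ‖(m : R) ^ 2‖ * ‖t‖ ^ 2 :=
        norm_sub_le_of_le (norm_mul_le _ _) (norm_mul_le_of_le le_rfl (norm_pow_le' t two_pos))
    _ ≤ (‖(1 : R)‖ + ‖(m : R)‖) * (C * ‖t‖ ^ 2) + ‖(m : R) ^ 2‖ * ‖t‖ ^ 2 := by
        gcongr
        exact hC t ht
    _ = ((‖(1 : R)‖ + ‖(m : R)‖) * C + ‖(m : R) ^ 2‖) * ‖t‖ ^ 2 := by ring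

theorem summable_norm_one_add_mul_one_sub_pow_sub_one {ι : Type*} {t : ι → R}
    (ht : ∀ i, ‖t i‖ ≤ 1) (hsum : Summable fun i => ‖t i‖ ^ 2) (m : ℕ) :
    Summable fun i => ‖(1 + m * t i) * (1 - t i) ^ m - 1‖ := by
  obtain ⟨C, hC⟩ := exists_norm_one_add_mul_one_sub_pow_sub_one_le R m
  exact (hsum.mul_left C).of_nonneg_of_le (fun _ => norm_nonneg _) fun i => hC _ (ht i)

theorem multipliable_of_summable_norm_sub_one [NormOneClass R] [CompleteSpace R]
    {ι : Type*} {f : ι → R}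
    (hf : Summable fun i => ‖f i - 1‖) : Multipliable f := by
  simpa using multipliable_one_add_of_summable hf

theorem tprod_pos_of_summable_sub_one {ι : Type*} {f : ι → ℝ} (hpos : ∀ i, 0 < f i)
    (hf : Summable fun i => f i - 1) : 0 < ∏' i, f i := by
  have hlog : Summable fun i => Real.log (f i) := by
    simpa using Real.summable_log_one_add_of_summable hf
  rw [← Real.rexp_tsum_eq_tprod hpos hlog]
  exact Real.exp_pos _

end InfiniteProducts

section WienerAlgebra

variable {R : Type*} [NormedCommRing R]

theorem tsum_norm_sum_mul_antidiagonal_le {a b : ℕ → R} (ha : Summable fun n => ‖a n‖)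
    (hb : Summable fun n => ‖b n‖) :
    ∑' n, ‖∑ k ∈ Finset.HasAntidiagonal.antidiagonal n, a k.1 * b k.2‖ ≤
      (∑' n, ‖a n‖) * ∑' n, ‖b n‖ := by
  have hab : Summable fun k : ℕ × ℕ => ‖a k.1‖ * ‖b k.2‖ :=
    ha.mul_of_nonneg hb (fun n => norm_nonneg (a n)) fun n => norm_nonneg (b n)
  rw [ha.tsum_mul_tsum_eq_tsum_sum_antidiagonal hb hab]
  refine Summable.tsum_le_tsum (fun n => norm_sum_le_of_le _ fun k _ => ?_)
    (summable_norm_sum_mul_antidiagonal_of_summable_norm ha hb)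
    (summable_sum_mul_antidiagonal_of_summable_mul (f := fun n => ‖a n‖) (g := fun n => ‖b n‖) hab)
  exact norm_mul_le (a k.1) (b k.2)

variable (R) in
/-- The power series with absolutely summable coefficients, as a subring. -/
def absSummableSubring : Subring R⟦X⟧ where
  carrier := {f | Summable fun n => ‖PowerSeries.coeff n f‖}
  mul_mem' {f g} hf hg := by
    simpa only [Set.mem_ofPred_eq, PowerSeries.coeff_mul] using
      summable_norm_sum_mul_antidiagonal_of_summable_norm hf hg
  one_mem' := by
    refine summable_of_ne_finset_zero (s := {0}) fun n hn => ?_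
    simp [PowerSeries.coeff_one, Finset.notMem_singleton.mp hn]
  add_mem' {f g} hf hg := by
    refine (hf.add hg).of_nonneg_of_le (fun _ => norm_nonneg _) fun n => ?_
    simpa only [map_add] using norm_add_le _ _
  zero_mem' := by simp [summable_zero]
  neg_mem' {f} hf := by simpa using hf

variable (R) in
/-- The Wiener algebra `ℓ¹(ℕ, R)` of power series with absolutely summable coefficients, a Banach
algebra under the `ℓ¹` norm. It is a type synonym of the subring rather than the subring itself, so
that it does not inherit the topology of coefficientwise convergence. -/
def WienerAlgebra : Type _ := absSummableSubring R

namespace WienerAlgebra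

instance : CommRing (WienerAlgebra R) := inferInstanceAs (CommRing (absSummableSubring R))

/-- The inclusion of the Wiener algebra in the ring of formal power series. -/
def toPowerSeries : WienerAlgebra R →+* R⟦X⟧ := (absSummableSubring R).subtype

theorem toPowerSeries_injective : Function.Injective (toPowerSeries (R := R)) :=
  Subtype.val_injective

theorem summable_norm_coeff (f : WienerAlgebra R) :
    Summable fun n => ‖PowerSeries.coeff n (toPowerSeries f)‖ :=
  f.2

/-- The coefficient sequence; it transports the norm and the completeness of `ℓ¹`. -/
def coeffEquiv : WienerAlgebra R ≃+ lp (fun _ : ℕ => R) 1 where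
  toFun f := ⟨fun n => PowerSeries.coeff n (toPowerSeries f),
    memℓp_gen (by simpa using f.summable_norm_coeff)⟩
  invFun a := ⟨PowerSeries.mk a, by
    simpa [absSummableSubring] using (lp.memℓp a).summable (by simp)⟩
  left_inv f := toPowerSeries_injective <| by
    ext n; exact PowerSeries.coeff_mk n fun n => PowerSeries.coeff n (toPowerSeries f)
  right_inv a := by ext n; exact PowerSeries.coeff_mk _ _
  map_add' f g := by ext n; exact map_add (PowerSeries.coeff n) _ _

theorem coeffEquiv_apply (f : WienerAlgebra R) (n : ℕ) :
    coeffEquiv f n = PowerSeries.coeff n (toPowerSeries f) :=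
  rfl

instance : NormedAddCommGroup (WienerAlgebra R) :=
  NormedAddCommGroup.induced _ _ (coeffEquiv (R := R)) coeffEquiv.injective

theorem norm_eq_tsum (f : WienerAlgebra R) :
    ‖f‖ = ∑' n, ‖PowerSeries.coeff n (toPowerSeries f)‖ := by
  refine (lp.norm_eq_tsum_rpow (by simp) (coeffEquiv f)).trans ?_
  simp [coeffEquiv_apply]

protected theorem norm_mul_le (f g : WienerAlgebra R) : ‖f * g‖ ≤ ‖f‖ * ‖g‖ := by
  simp only [norm_eq_tsum, map_mul, PowerSeries.coeff_mul]
  exact tsum_norm_sum_mul_antidiagonal_le f.summable_norm_coeff g.summable_norm_coeff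

instance : NormedCommRing (WienerAlgebra R) where
  dist_eq := dist_eq_norm_neg_add
  norm_mul_le := WienerAlgebra.norm_mul_le
  mul_comm := mul_comm

theorem isometry_coeffEquiv : Isometry (coeffEquiv (R := R)) :=
  AddMonoidHomClass.isometry_of_norm _ fun _ => rfl

instance [CompleteSpace R] : CompleteSpace (WienerAlgebra R) :=
  (IsometryEquiv.mk coeffEquiv.toEquiv isometry_coeffEquiv).completeSpace

theorem norm_coeff_le (n : ℕ) (f : WienerAlgebra R) :
    ‖PowerSeries.coeff n (toPowerSeries f)‖ ≤ ‖f‖ :=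
  lp.norm_apply_le_norm one_ne_zero (coeffEquiv f) n

open scoped PowerSeries.WithPiTopology in
theorem continuous_toPowerSeries : Continuous (toPowerSeries (R := R)) := by
  refine continuous_iff_continuousAt.mpr fun f => ?_
  refine (PowerSeries.WithPiTopology.tendsto_iff_coeff_tendsto R _ _ _).mpr fun n => ?_
  exact (AddMonoidHomClass.continuous_of_bound
    ((PowerSeries.coeff n).toAddMonoidHom.comp (toPowerSeries (R := R)).toAddMonoidHom) 1
    fun f => by simpa using norm_coeff_le n f).continuousAt

/-- `a X ^ n` as an element of the Wiener algebra. -/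
def monomial (n : ℕ) (a : R) : WienerAlgebra R :=
  ⟨PowerSeries.monomial n a, summable_of_ne_finset_zero (s := {n}) fun k hk => by
    simp [PowerSeries.coeff_monomial, Finset.notMem_singleton.mp hk]⟩

theorem toPowerSeries_monomial (n : ℕ) (a : R) :
    toPowerSeries (monomial n a) = PowerSeries.monomial n a :=
  rfl

theorem norm_monomial (n : ℕ) (a : R) : ‖monomial n a‖ = ‖a‖ := by
  rw [norm_eq_tsum, tsum_eq_single n] <;>
    simp +contextual [toPowerSeries_monomial, PowerSeries.coeff_monomial]

instance [NormOneClass R] : NormOneClass (WienerAlgebra R) where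
  norm_one := by
    rw [norm_eq_tsum, tsum_eq_single 0] <;> simp +contextual [PowerSeries.coeff_one]

variable [CompleteSpace R]

/-- Evaluation at `1`. -/
def evalOne : WienerAlgebra R →+* R where
  toFun f := ∑' n, PowerSeries.coeff n (toPowerSeries f)
  map_one' := by simp [PowerSeries.coeff_one]
  map_mul' f g := by
    rw [tsum_mul_tsum_eq_tsum_sum_antidiagonal_of_summable_norm
      f.summable_norm_coeff g.summable_norm_coeff]
    simp only [map_mul, PowerSeries.coeff_mul]
  map_zero' := by simp
  map_add' f g := by
    simp only [map_add]
    exact f.summable_norm_coeff.of_norm.tsum_add g.summable_norm_coeff.of_norm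

theorem evalOne_apply (f : WienerAlgebra R) :
    evalOne f = ∑' n, PowerSeries.coeff n (toPowerSeries f) :=
  rfl

theorem continuous_evalOne : Continuous (evalOne (R := R)) :=
  AddMonoidHomClass.continuous_of_bound (evalOne (R := R)) 1 fun f => by
    rw [one_mul, norm_eq_tsum, evalOne_apply]
    exact norm_tsum_le_tsum_norm f.summable_norm_coeff

theorem evalOne_monomial (n : ℕ) (a : R) : evalOne (monomial n a) = a := by
  rw [evalOne_apply, tsum_eq_single n] <;>
    simp +contextual [toPowerSeries_monomial, PowerSeries.coeff_monomial]

end WienerAlgebra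

end WienerAlgebra

section Factorization

variable {F : Type*} [Field F]

variable (F) in
/-- The monic irreducible polynomials over `F`, the index set of the Euler products. -/
abbrev MonicIrreducible : Type _ := {P : F[X] // P.Monic ∧ Irreducible P}

namespace MonicIrreducible

theorem isRelPrime_of_ne {P Q : MonicIrreducible F} (h : P ≠ Q) : IsRelPrime P.1 Q.1 := by
  rw [P.2.2.isRelPrime_iff_not_dvd, P.2.2.dvd_irreducible_iff_associated Q.2.2]
  exact fun hPQ => h (Subtype.ext (eq_of_monic_of_associated P.2.1 Q.2.1 hPQ))

theorem monic_prod (T : Finset (MonicIrreducible F)) : (∏ P ∈ T, P.1).Monic :=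
  monic_prod_of_monic _ _ fun P _ => P.2.1

theorem natDegree_prod (T : Finset (MonicIrreducible F)) :
    (∏ P ∈ T, P.1).natDegree = ∑ P ∈ T, P.1.natDegree :=
  natDegree_prod_of_monic _ _ fun P _ => P.2.1

theorem squarefree_prod (T : Finset (MonicIrreducible F)) : Squarefree (∏ P ∈ T, P.1) :=
  Finset.squarefree_prod_of_pairwise_isCoprime (fun _ _ _ _ => isRelPrime_of_ne)
    fun P _ => P.2.2.squarefree

theorem prod_dvd {T : Finset (MonicIrreducible F)} {f : F[X]} (h : ∀ P ∈ T, P.1 ∣ f) :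
    ∏ P ∈ T, P.1 ∣ f :=
  Finset.prod_dvd_of_isRelPrime (fun _ _ _ _ => isRelPrime_of_ne) h

theorem dvd_prod_iff {T : Finset (MonicIrreducible F)} {P : MonicIrreducible F} :
    P.1 ∣ ∏ Q ∈ T, Q.1 ↔ P ∈ T := by
  refine ⟨fun h => ?_, fun h => Finset.dvd_prod_of_mem _ h⟩
  obtain ⟨Q, hQ, hPQ⟩ := (P.2.2.prime.dvd_finsetProd_iff _).mp h
  by_contra hP
  have hne : P ≠ Q := fun h => hP (h ▸ hQ)
  exact P.2.2.isRelPrime_iff_not_dvd.mp (isRelPrime_of_ne hne) hPQ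

theorem prod_injective :
    Function.Injective fun T : Finset (MonicIrreducible F) => ∏ P ∈ T, P.1 := by
  intro T U h
  ext P
  rw [← dvd_prod_iff, ← dvd_prod_iff]
  exact iff_of_eq (congrArg (P.1 ∣ ·) h)

theorem natCard_dvd_prod (T : Finset (MonicIrreducible F)) :
    Nat.card {g : F[X] // g.Monic ∧ Irreducible g ∧ g ∣ ∏ P ∈ T, P.1} = T.card := by
  have himage : {g : F[X] | g.Monic ∧ Irreducible g ∧ g ∣ ∏ P ∈ T, P.1} =
      T.map (Function.Embedding.subtype _) := by
    ext g
    simp only [Set.mem_ofPred_eq, Finset.coe_map, Set.mem_image, Finset.mem_coe]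
    constructor
    · rintro ⟨hm, hi, hd⟩
      exact ⟨⟨g, hm, hi⟩, dvd_prod_iff.mp hd, rfl⟩
    · rintro ⟨P, hP, rfl⟩
      exact ⟨P.2.1, P.2.2, dvd_prod_iff.mpr hP⟩
  rw [← Finset.card_map (Function.Embedding.subtype _), ← Set.ncard_coe_finset, ← himage]
  rfl

open UniqueFactorizationMonoid in
/-- The set of monic irreducible divisors of a nonzero polynomial; `∅` for `0`. -/
def divisors (f : F[X]) : Finset (MonicIrreducible F) :=
  open scoped Classical in (primeFactors f).subtype _

open scoped Classical in
theorem mem_divisors {f : F[X]} (hf : f ≠ 0) {P : MonicIrreducible F} :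
    P ∈ divisors f ↔ P.1 ∣ f := by
  rw [divisors, Finset.mem_subtype, UniqueFactorizationMonoid.mem_primeFactors,
    Polynomial.mem_normalizedFactors_iff hf]
  exact ⟨fun h => h.2.2, fun h => ⟨P.2.2, P.2.1, h⟩⟩

theorem subset_divisors_iff {f : F[X]} (hf : f ≠ 0) {T : Finset (MonicIrreducible F)} :
    T ⊆ divisors f ↔ ∏ P ∈ T, P.1 ∣ f :=
  ⟨fun h => prod_dvd fun _ hP => (mem_divisors hf).mp (h hP),
    fun h _ hP => (mem_divisors hf).mpr ((dvd_prod_iff.mpr hP).trans h)⟩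

theorem exists_dvd_of_ne_one {f : F[X]} (hf : f.Monic) (h : f ≠ 1) :
    ∃ P : MonicIrreducible F, P.1 ∣ f := by
  obtain ⟨P, hm, hi, hd⟩ := exists_monic_irreducible_factor f (mt hf.isUnit_iff.mp h)
  exact ⟨⟨P, hm, hi⟩, hd⟩

theorem divisors_eq_empty_iff {f : F[X]} (hf : f.Monic) : divisors f = ∅ ↔ f = 1 := by
  refine ⟨fun h => by_contra fun hne => ?_, ?_⟩
  · obtain ⟨P, hP⟩ := exists_dvd_of_ne_one hf hne
    exact Finset.notMem_empty P (h ▸ (mem_divisors hf.ne_zero).mpr hP)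
  · rintro rfl
    exact Finset.eq_empty_of_forall_notMem fun P hP =>
      P.2.2.not_isUnit (isUnit_of_dvd_one ((mem_divisors one_ne_zero).mp hP))

theorem prod_divisors {f : F[X]} (hf : f.Monic) (hsq : Squarefree f) :
    ∏ P ∈ divisors f, P.1 = f := by
  obtain ⟨h, hfh⟩ := (subset_divisors_iff hf.ne_zero).mp subset_rfl
  have hh : h.Monic := (monic_prod _).of_mul_monic_left (hfh ▸ hf)
  suffices h = 1 by rwa [this, mul_one, eq_comm] at hfh
  by_contra hne
  obtain ⟨P, hPh⟩ := exists_dvd_of_ne_one hh hne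
  have hPf : P.1 ∣ f := hfh ▸ hPh.mul_left _
  have hPP : P.1 * P.1 ∣ f := by
    rw [hfh]
    exact mul_dvd_mul (dvd_prod_iff.mpr ((mem_divisors hf.ne_zero).mpr hPf)) hPh
  exact P.2.2.not_isUnit (hsq _ hPP)

end MonicIrreducible

section Counting

variable (F) in
theorem ncard_monic_natDegree_eq (n : ℕ) :
    {f : F[X] | f.Monic ∧ f.natDegree = n}.ncard = Nat.card F ^ n :=
  (Nat.card_congr ((monicEquivDegreeLT n).trans (degreeLTEquiv F n).toEquiv)).trans
    (by rw [Nat.card_fun, Nat.card_fin])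

variable [Finite F]

variable (F) in
theorem finite_monic_natDegree_eq (n : ℕ) : {f : F[X] | f.Monic ∧ f.natDegree = n}.Finite :=
  Set.finite_coe_iff.mp
    (Finite.of_equiv _ ((monicEquivDegreeLT n).trans (degreeLTEquiv F n).toEquiv).symm)

variable (F) in
/-- The monic polynomials of degree `n` over a finite field. -/
def monicOfDegree (n : ℕ) : Finset F[X] :=
  (finite_monic_natDegree_eq F n).toFinset

theorem mem_monicOfDegree {n : ℕ} {f : F[X]} :
    f ∈ monicOfDegree F n ↔ f.Monic ∧ f.natDegree = n :=
  Set.Finite.mem_toFinset _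

variable (F) in
theorem card_monicOfDegree (n : ℕ) : (monicOfDegree F n).card = Nat.card F ^ n := by
  rw [← ncard_monic_natDegree_eq, ← Set.ncard_coe_finset]
  simp [monicOfDegree]

namespace MonicIrreducible

variable (F) in
theorem finite_natDegree_eq (n : ℕ) : {P : MonicIrreducible F | P.1.natDegree = n}.Finite :=
  .of_injOn (t := {f : F[X] | f.Monic ∧ f.natDegree = n}) (fun P hP => ⟨P.2.1, hP⟩)
    Subtype.val_injective.injOn (finite_monic_natDegree_eq F n)

variable (F) in
theorem ncard_natDegree_eq_le (n : ℕ) :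
    {P : MonicIrreducible F | P.1.natDegree = n}.ncard ≤ Nat.card F ^ n :=
  (Set.ncard_le_ncard_of_injOn (t := {f : F[X] | f.Monic ∧ f.natDegree = n}) Subtype.val
    (fun P hP => ⟨P.2.1, hP⟩) Subtype.val_injective.injOn
    (finite_monic_natDegree_eq F n)).trans_eq (ncard_monic_natDegree_eq F n)

variable (F) in
theorem summable_natDegree {a : ℕ → ℝ} (ha : ∀ n, 0 ≤ a n)
    (hsum : Summable fun n => (Nat.card F : ℝ) ^ n * a n) :
    Summable fun P : MonicIrreducible F => a P.1.natDegree := by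
  refine (Equiv.sigmaFiberEquiv fun P : MonicIrreducible F => P.1.natDegree).summable_iff.mp ?_
  have hfinite (n : ℕ) : Finite {P : MonicIrreducible F // P.1.natDegree = n} :=
    finite_natDegree_eq F n
  refine (summable_sigma_of_nonneg fun x => ha _).mpr ⟨fun n => Summable.of_finite,
    hsum.of_nonneg_of_le (fun n => tsum_nonneg fun _ => ha _) fun n => ?_⟩
  have hconst (P : {P : MonicIrreducible F // P.1.natDegree = n}) : a P.1.1.natDegree = a n :=
    congrArg a P.2
  simp only [Equiv.sigmaFiberEquiv_apply, hconst, tsum_const, nsmul_eq_mul]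
  exact mul_le_mul_of_nonneg_right (mod_cast ncard_natDegree_eq_le F n) (ha n)

theorem finite_sum_natDegree_eq (n : ℕ) :
    {T : Finset (MonicIrreducible F) | ∑ P ∈ T, P.1.natDegree = n}.Finite :=
  Set.Finite.of_injOn (t := {f : F[X] | f.Monic ∧ f.natDegree = n})
    (fun T hT => ⟨monic_prod T, (natDegree_prod T).trans hT⟩) prod_injective.injOn
    (finite_monic_natDegree_eq F n)

variable (F) in
/-- The finite sets of monic irreducible polynomials of total degree `n`. Through `T ↦ ∏ P ∈ T, P`
they encode the monic squarefree polynomials of degree `n`, with `T.card` the number of prime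
factors. -/
def setsOfDegree (n : ℕ) : Finset (Finset (MonicIrreducible F)) :=
  (finite_sum_natDegree_eq n).toFinset

theorem mem_setsOfDegree {n : ℕ} {T : Finset (MonicIrreducible F)} :
    T ∈ setsOfDegree F n ↔ ∑ P ∈ T, P.1.natDegree = n :=
  Set.Finite.mem_toFinset _

theorem bijOn_prod_setsOfDegree (n : ℕ) :
    Set.BijOn (fun T : Finset (MonicIrreducible F) => ∏ P ∈ T, P.1) (setsOfDegree F n)
      {f | f.Monic ∧ Squarefree f ∧ f.natDegree = n} := by
  refine ⟨fun T hT => ?_, prod_injective.injOn, ?_⟩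
  · exact ⟨monic_prod T, squarefree_prod T, (natDegree_prod T).trans (mem_setsOfDegree.mp hT)⟩
  · rintro f ⟨hm, hsq, rfl⟩
    refine ⟨divisors f, mem_setsOfDegree.mpr ?_, prod_divisors hm hsq⟩
    rw [← natDegree_prod, prod_divisors hm hsq]

theorem finsum_squarefree_eq_sum_setsOfDegree {M : Type*} [AddCommMonoid M] (φ : ℕ → M)
    (n : ℕ) {ω : F[X] → ℕ}
    (hω : ∀ f : F[X], f ≠ 0 → ω f = Nat.card {g : F[X] // g.Monic ∧ Irreducible g ∧ g ∣ f}) :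
    ∑ᶠ f ∈ {f : F[X] | f.Monic ∧ Squarefree f ∧ f.natDegree = n}, φ (ω f) =
      ∑ T ∈ setsOfDegree F n, φ T.card := by
  rw [← finsum_mem_coe_finset]
  refine (finsum_mem_eq_of_bijOn _ (bijOn_prod_setsOfDegree n) fun T _ => ?_).symm
  rw [hω _ (monic_prod T).ne_zero, natCard_dvd_prod]

/-- The identity comes from `(T, g) ↦ (∏ P ∈ T, P) * g`, whose fibre over `f` is the set of
`T ⊆ divisors f`. -/
theorem sum_setsOfDegree_mul_card {S : Type*} [CommSemiring S] (n : ℕ)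
    (φ : Finset (MonicIrreducible F) → S) :
    ∑ k ∈ Finset.HasAntidiagonal.antidiagonal n,
        (∑ T ∈ setsOfDegree F k.1, φ T) * (Nat.card F : S) ^ k.2 =
      ∑ f ∈ monicOfDegree F n, ∑ T ∈ (divisors f).powerset, φ T := by
  have hcard (k : ℕ × ℕ) : (∑ T ∈ setsOfDegree F k.1, φ T) * (Nat.card F : S) ^ k.2 =
      ∑ x ∈ setsOfDegree F k.1 ×ˢ monicOfDegree F k.2, φ x.1 := by
    simp [Finset.sum_product, card_monicOfDegree, Finset.sum_mul, nsmul_eq_mul, mul_comm (φ _)]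
  simp_rw [hcard]
  rw [Finset.sum_sigma', Finset.sum_sigma']
  refine Finset.sum_nbij (fun x => ⟨(∏ P ∈ x.2.1, P.1) * x.2.2, x.2.1⟩) ?_ ?_ ?_ fun _ _ => rfl
  · rintro ⟨k, T, g⟩ h
    simp only [Finset.mem_sigma, Finset.HasAntidiagonal.mem_antidiagonal, Finset.mem_product,
      mem_setsOfDegree, mem_monicOfDegree, Finset.mem_powerset] at h ⊢
    obtain ⟨hk, hT, hg, hdeg⟩ := h
    have hf := (monic_prod T).mul hg
    refine ⟨⟨hf, ?_⟩, (subset_divisors_iff hf.ne_zero).mpr (dvd_mul_right _ _)⟩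
    rw [(monic_prod T).natDegree_mul hg, natDegree_prod, hT, hdeg, hk]
  · rintro ⟨⟨i, j⟩, T, g⟩ h ⟨⟨i', j'⟩, T', g'⟩ h' heq
    simp only [Finset.coe_sigma, Set.mem_sigma_iff, Finset.mem_coe, Finset.mem_product,
      Finset.HasAntidiagonal.mem_antidiagonal, mem_setsOfDegree, mem_monicOfDegree] at h h'
    simp only [Sigma.mk.injEq, heq_eq_eq] at heq
    obtain ⟨heq, rfl⟩ := heq
    obtain rfl := mul_left_cancel₀ (monic_prod T).ne_zero heq
    simp [← h.2.1, ← h'.2.1, ← h.2.2.2, ← h'.2.2.2]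
  · rintro ⟨f, T⟩ h
    simp only [Finset.coe_sigma, Set.mem_sigma_iff, Finset.mem_coe, Finset.mem_powerset,
      mem_monicOfDegree] at h
    obtain ⟨⟨hf, hdeg⟩, hT⟩ := h
    obtain ⟨g, rfl⟩ := (subset_divisors_iff hf.ne_zero).mp hT
    have hg : g.Monic := (monic_prod T).of_mul_monic_left hf
    refine ⟨⟨(∑ P ∈ T, P.1.natDegree, g.natDegree), T, g⟩, ?_, rfl⟩
    simp [mem_setsOfDegree, mem_monicOfDegree, hg, ← hdeg, (monic_prod T).natDegree_mul hg,
      natDegree_prod]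

variable (F) in
theorem sum_antidiagonal_neg_one_pow_card_mul (S : Type*) [CommRing S] (n : ℕ) :
    ∑ k ∈ Finset.HasAntidiagonal.antidiagonal n,
        (∑ T ∈ setsOfDegree F k.1, (-1 : S) ^ T.card) * (Nat.card F : S) ^ k.2 =
      if n = 0 then 1 else 0 := by
  classical
  have hone : ∀ f ∈ monicOfDegree F n,
      ∑ T ∈ (divisors f).powerset, (-1 : S) ^ T.card = if f = 1 then 1 else 0 := by
    intro f hf
    have hsum := congrArg (Int.cast (R := S))
      (Finset.sum_powerset_neg_one_pow_card (x := divisors f))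
    simpa [divisors_eq_empty_iff (mem_monicOfDegree.mp hf).1] using hsum
  rw [sum_setsOfDegree_mul_card, Finset.sum_congr rfl hone, Finset.sum_ite_eq']
  simp [mem_monicOfDegree, eq_comm]

variable (F) in
/-- The left side is `∑ μ(f) X ^ deg f = 1 / ζ(X)`, where `ζ(X) = 1 / (1 - q X)` is the sum of
`X ^ deg f` over the monic `f`. -/
theorem mk_sum_neg_one_pow_card (S : Type*) [CommRing S] :
    PowerSeries.mk (fun n => ∑ T ∈ setsOfDegree F n, (-1 : S) ^ T.card) =
      1 - PowerSeries.C (Nat.card F : S) * PowerSeries.X := by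
  have hzeta : PowerSeries.mk (fun n => ∑ T ∈ setsOfDegree F n, (-1 : S) ^ T.card) *
      PowerSeries.mk (fun n => (Nat.card F : S) ^ n) = 1 := by
    ext n
    rw [PowerSeries.coeff_mul, PowerSeries.coeff_one,
      ← sum_antidiagonal_neg_one_pow_card_mul F S n]
    simp only [PowerSeries.coeff_mk]
  exact left_inv_eq_right_inv hzeta (mk_pow_mul_one_sub_C_mul_X _)

open scoped PowerSeries.WithPiTopology

variable (F) in
theorem hasProd_one_add_monomial {S : Type*} [CommRing S] [TopologicalSpace S] (z u : S) :
    HasProd (fun P : MonicIrreducible F =>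
        1 + PowerSeries.monomial P.1.natDegree (z * u ^ P.1.natDegree))
      (PowerSeries.mk fun n => (∑ T ∈ setsOfDegree F n, z ^ T.card) * u ^ n) := by
  have hprod (T : Finset (MonicIrreducible F)) :
      ∏ P ∈ T, PowerSeries.monomial P.1.natDegree (z * u ^ P.1.natDegree) =
        PowerSeries.monomial (∑ P ∈ T, P.1.natDegree)
          (z ^ T.card * u ^ ∑ P ∈ T, P.1.natDegree) := by
    rw [PowerSeries.prod_monomial, Finset.prod_mul_distrib, Finset.prod_const,
      Finset.prod_pow_eq_pow_sum]
  refine hasProd_one_add_of_hasSum_prod ?_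
  refine (PowerSeries.WithPiTopology.hasSum_iff_hasSum_coeff S).mpr fun n => ?_
  simp only [hprod, PowerSeries.coeff_monomial, PowerSeries.coeff_mk]
  rw [Finset.sum_mul]
  have hsum : ∑ T ∈ setsOfDegree F n, z ^ T.card * u ^ n = ∑ T ∈ setsOfDegree F n,
      if n = ∑ P ∈ T, P.1.natDegree then z ^ T.card * u ^ ∑ P ∈ T, P.1.natDegree else 0 :=
    Finset.sum_congr rfl fun T hT => by rw [mem_setsOfDegree.mp hT, if_pos rfl]
  rw [hsum]
  exact hasSum_sum_of_ne_finset_zero fun T hT =>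
    if_neg fun h => hT (mem_setsOfDegree.mpr h.symm)

variable (F) in
theorem hasProd_one_sub_monomial :
    HasProd (fun P : MonicIrreducible F =>
        1 - PowerSeries.monomial P.1.natDegree ((Nat.card F : ℝ)⁻¹ ^ P.1.natDegree))
      (1 - PowerSeries.X) := by
  have hscale : PowerSeries.rescale (Nat.card F : ℝ)⁻¹
      (1 - PowerSeries.C (Nat.card F : ℝ) * PowerSeries.X) = 1 - PowerSeries.X := by
    have hq : (Nat.card F : ℝ) * (Nat.card F : ℝ)⁻¹ = 1 :=
      mul_inv_cancel₀ (Nat.cast_ne_zero.mpr Nat.card_pos.ne')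
    simp only [map_sub, map_one, map_mul, map_natCast, PowerSeries.rescale_X]
    rw [← map_natCast PowerSeries.C, ← mul_assoc, ← map_mul, hq, map_one, one_mul]
  rw [← hscale, ← mk_sum_neg_one_pow_card F ℝ, PowerSeries.rescale_mk]
  simpa [mul_comm, sub_eq_add_neg] using hasProd_one_add_monomial F (-1) (Nat.card F : ℝ)⁻¹

variable (F) in
theorem hasProd_one_add_mul_one_sub_pow (m : ℕ) :
    HasProd (fun P : MonicIrreducible F =>
        (1 + m * PowerSeries.monomial P.1.natDegree ((Nat.card F : ℝ)⁻¹ ^ P.1.natDegree)) *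
          (1 - PowerSeries.monomial P.1.natDegree ((Nat.card F : ℝ)⁻¹ ^ P.1.natDegree)) ^ m)
      (PowerSeries.mk (fun n =>
          (∑ T ∈ setsOfDegree F n, (m : ℝ) ^ T.card) * (Nat.card F : ℝ)⁻¹ ^ n) *
        (1 - PowerSeries.X) ^ m) := by
  have hadd := hasProd_one_add_monomial F (m : ℝ) (Nat.card F : ℝ)⁻¹
  simp only [← nsmul_eq_mul, map_nsmul] at hadd ⊢
  exact hadd.mul ((hasProd_one_sub_monomial F).pow m)

end MonicIrreducible

end Counting

end Factorization

section EulerConstant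

open MonicIrreducible

theorem inv_natCard_lt_one (α : Type*) [Finite α] [Nontrivial α] : (Nat.card α : ℝ)⁻¹ < 1 :=
  inv_lt_one_of_one_lt₀ (Nat.one_lt_cast.mpr Finite.one_lt_card)

variable (F : Type*) [Field F] [Finite F]

theorem summable_inv_natCard_pow_natDegree_sq :
    Summable fun P : MonicIrreducible F => ((Nat.card F : ℝ)⁻¹ ^ P.1.natDegree) ^ 2 := by
  refine summable_natDegree F (a := fun n => ((Nat.card F : ℝ)⁻¹ ^ n) ^ 2)
    (fun n => by positivity) ?_
  refine (summable_geometric_of_lt_one (by positivity) (inv_natCard_lt_one F)).congr fun n => ?_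
  have hq : (Nat.card F : ℝ) ≠ 0 := Nat.cast_ne_zero.mpr Nat.card_pos.ne'
  rw [pow_two, ← mul_assoc, ← mul_pow, mul_inv_cancel₀ hq, one_pow, one_mul]

theorem summable_norm_eulerFactor_sub_one {R : Type*} [NormedCommRing R]
    {t : MonicIrreducible F → R} (ht : ∀ P, ‖t P‖ = (Nat.card F : ℝ)⁻¹ ^ P.1.natDegree) (m : ℕ) :
    Summable fun P => ‖(1 + m * t P) * (1 - t P) ^ m - 1‖ := by
  refine summable_norm_one_add_mul_one_sub_pow_sub_one (fun P => ?_) ?_ m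
  · rw [ht]
    exact pow_le_one₀ (by positivity) (inv_natCard_lt_one F).le
  · simpa only [ht] using summable_inv_natCard_pow_natDegree_sq F

/-- The Euler product `∏ P, (1 + m q⁻ᵈ) (1 - q⁻ᵈ) ^ m` with `d = deg P`, over the monic irreducible
`P`. It is the value at `X = 1` of `(1 - X) ^ m A`, where `A` is the generating series of
`n ↦ q⁻ⁿ ∑ m ^ ω f` over the monic squarefree `f` of degree `n`. -/
def eulerConstant (m : ℕ) : ℝ :=
  ∏' P : MonicIrreducible F, (1 + m * (Nat.card F : ℝ)⁻¹ ^ P.1.natDegree) *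
    (1 - (Nat.card F : ℝ)⁻¹ ^ P.1.natDegree) ^ m

theorem eulerConstant_pos (m : ℕ) : 0 < eulerConstant F m := by
  refine tprod_pos_of_summable_sub_one (fun P => ?_)
    (summable_norm_eulerFactor_sub_one F (t := fun P => (Nat.card F : ℝ)⁻¹ ^ P.1.natDegree)
      (fun P => ?_) m).of_norm
  · have hlt : (Nat.card F : ℝ)⁻¹ ^ P.1.natDegree < 1 :=
      pow_lt_one₀ (by positivity) (inv_natCard_lt_one F) P.2.2.natDegree_pos.ne'
    exact mul_pos (by positivity) (pow_pos (sub_pos.mpr hlt) m)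
  · exact Real.norm_of_nonneg (by positivity)

theorem exists_wienerAlgebra_eulerProduct (m : ℕ) :
    ∃ g : WienerAlgebra ℝ, g.evalOne = eulerConstant F m ∧ g.toPowerSeries =
      PowerSeries.mk (fun n =>
          (∑ T ∈ setsOfDegree F n, (m : ℝ) ^ T.card) * (Nat.card F : ℝ)⁻¹ ^ n) *
        (1 - PowerSeries.X) ^ m := by
  let t (P : MonicIrreducible F) : WienerAlgebra ℝ :=
    .monomial P.1.natDegree ((Nat.card F : ℝ)⁻¹ ^ P.1.natDegree)
  have ht (P : MonicIrreducible F) : ‖t P‖ = (Nat.card F : ℝ)⁻¹ ^ P.1.natDegree :=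
    (WienerAlgebra.norm_monomial _ _).trans (Real.norm_of_nonneg (by positivity))
  have hprod := (multipliable_of_summable_norm_sub_one
    (summable_norm_eulerFactor_sub_one F ht m)).hasProd
  refine ⟨∏' P, (1 + m * t P) * (1 - t P) ^ m, ?_, ?_⟩
  · have heval := (hprod.map _ WienerAlgebra.continuous_evalOne).tprod_eq
    simpa [t, eulerConstant, Function.comp_def, WienerAlgebra.evalOne_monomial] using heval.symm
  · open scoped PowerSeries.WithPiTopology in
    have hseries := hprod.map _ WienerAlgebra.continuous_toPowerSeries
    simp only [t, Function.comp_def, map_mul, map_add, map_sub, map_pow, map_one, map_natCast,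
      WienerAlgebra.toPowerSeries_monomial] at hseries
    exact hseries.unique (hasProd_one_add_mul_one_sub_pow F m)

theorem tendsto_sum_setsOfDegree_div {m : ℕ} (hm : 0 < m) :
    Tendsto (fun n : ℕ => (∑ T ∈ setsOfDegree F n, (m : ℝ) ^ T.card) /
        ((Nat.card F : ℝ) ^ n * (n : ℝ) ^ (m - 1))) atTop
      (𝓝 (eulerConstant F m / (m - 1).factorial)) := by
  obtain ⟨g, hg, hseries⟩ := exists_wienerAlgebra_eulerProduct F m
  rw [← hg, WienerAlgebra.evalOne_apply]
  rw [← Nat.sub_add_cancel hm] at hseries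
  refine (tendsto_coeff_div_pow_of_mul_one_sub_X_pow g.summable_norm_coeff hseries.symm).congr
    fun n => ?_
  rw [PowerSeries.coeff_mk, inv_pow, ← div_eq_mul_inv, div_div, Nat.sub_add_cancel hm]

variable {F} in
theorem stmt_6_general {m : ℕ} (hm : 0 < m) {ω : F[X] → ℕ}
    (hω : ∀ f : F[X], f ≠ 0 → ω f = Nat.card {g : F[X] // g.Monic ∧ Irreducible g ∧ g ∣ f}) :
    0 < eulerConstant F m / (m - 1).factorial ∧
      Tendsto (fun d : ℕ =>
          (∑ᶠ f ∈ {f : F[X] | f.Monic ∧ Squarefree f ∧ f.natDegree = d}, ((m ^ ω f : ℕ) : ℝ)) /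
            ((Nat.card F : ℝ) ^ d * (d : ℝ) ^ (m - 1)))
        atTop (𝓝 (eulerConstant F m / (m - 1).factorial)) := by
  refine ⟨div_pos (eulerConstant_pos F m) (Nat.cast_pos.mpr (Nat.factorial_pos _)), ?_⟩
  refine (tendsto_sum_setsOfDegree_div F hm).congr fun d => ?_
  rw [finsum_squarefree_eq_sum_setsOfDegree (fun k => ((m ^ k : ℕ) : ℝ)) d hω]
  simp only [Nat.cast_pow]

end EulerConstant

end

/-- The combinatorial content of Lemma 2.4: the sum of `(ℓ-1)^{ω(f)}` over monic
squarefree `f` of degree `d` is asymptotic to `c·q^d·d^{ℓ-2}` for some `c > 0`,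
where `ω(f)` is the number of distinct monic irreducible factors of `f`. -/
theorem stmt_6 (p e q ℓ : ℕ) (hp : p.Prime) (hpodd : Odd p) (hℓ : ℓ.Prime) (hℓodd : Odd ℓ)
    (he : 0 < e) (hq : q = p ^ e) (hqℓ : q % ℓ = 1)
    (Fq : Type) [Field Fq] [Fintype Fq] (hcard : Fintype.card Fq = q)
    (ω : Fq[X] → ℕ)
    (hω : ∀ f : Fq[X], f ≠ 0 →
      ω f = Nat.card {g : Fq[X] // g.Monic ∧ Irreducible g ∧ g ∣ f}) :
    ∃ c : ℝ, 0 < c ∧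
      Tendsto
        (fun d : ℕ =>
          (∑ᶠ f ∈ {f : Fq[X] | f.Monic ∧ Squarefree f ∧ f.natDegree = d},
            (((ℓ - 1 : ℕ) ^ ω f : ℕ) : ℝ)) / ((q : ℝ) ^ d * (d : ℝ) ^ (ℓ - 2)))
        atTop (nhds c) := by
  rw [← hcard, ← Nat.card_eq_fintype_card]
  exact ⟨_, stmt_6_general (Nat.sub_pos_of_lt hℓ.one_lt) hω⟩
end

section
/- Let 𝔽_q be a finite field with q elements and let ℓ be a prime dividing q − 1. Let f ∈ 𝔽_q[t] be a nonzero polynomial with exactly r distinct monic irreducible factors. Then the number of group homomorphisms from (𝔽_q[t]/(f))ˣ to the cyclic group ℤ/ℓℤ equals ℓ^r. -/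
open Polynomial

/-!
Let `R` be a finite commutative ring and let `A` be an abelian group whose exponent `n` divides
`|R ⧸ m| - 1` for every maximal ideal `m`. Then `n` lies in no maximal ideal, so it is invertible
in `R`, and Newton's method makes every unit congruent to `1` modulo the nilradical an `n`-th
power. Homomorphisms `Rˣ →* A` kill `n`-th powers, hence factor through
`(R ⧸ nilradical R)ˣ ≃* ∏ m, (R ⧸ m)ˣ`. Each factor is cyclic of order divisible by `n`, so it has
exactly `|A|` homomorphisms to `A`, one for each image of a generator.

For `R = F[X] ⧸ (f)` the residue fields are extensions of `F`, so `|F| - 1` divides each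
`|R ⧸ m| - 1`, and the maximal ideals are generated by the monic irreducible factors of `f`.
-/

theorem natCard_monoidHom_of_isCyclic {G A : Type*} [Group G] [IsCyclic G] [Group A]
    (h : Monoid.exponent A ∣ Nat.card G) : Nat.card (G →* A) = Nat.card A := by
  obtain ⟨g, hg⟩ := IsCyclic.exists_generator (α := G)
  refine Nat.card_eq_of_bijective (fun φ : G →* A => φ g) ⟨fun φ ψ hφψ => ?_, fun a => ?_⟩
  · exact (MonoidHom.eq_iff_eq_on_generator hg φ ψ).2 hφψ
  · have ha : orderOf a ∣ orderOf g :=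
      (Monoid.order_dvd_exponent a).trans (orderOf_eq_card_of_forall_mem_zpowers hg ▸ h)
    exact ⟨monoidHomOfForallMemZpowers hg ha, monoidHomOfForallMemZpowers_apply_gen hg ha⟩

section CommRing

variable {R : Type*} [CommRing R]

theorem exists_units_pow_eq_of_isNilpotent_sub_one {n : ℕ} (hn : IsUnit (n : R)) {u : Rˣ}
    (hu : IsNilpotent ((u : R) - 1)) : ∃ v : Rˣ, v ^ n = u := by
  let P : R[X] := X ^ n - C (u : R)
  have hP : IsNilpotent (aeval (1 : R) P) := by simpa [P] using hu.neg
  have hP' : IsUnit (aeval (1 : R) (derivative P)) := by simpa [P, derivative_X_pow] using hn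
  obtain ⟨v, ⟨hv, hvu⟩, -⟩ := existsUnique_nilpotent_sub_and_aeval_eq_zero hP hP'
  have hv_unit : IsUnit v := by simpa using hv.isUnit_one_sub
  refine ⟨hv_unit.unit, Units.ext ?_⟩
  simpa [P, sub_eq_zero] using hvu

theorem natCard_units_quotient_nilradical_monoidHom {A : Type*} [Group A]
    (hA : IsUnit (Monoid.exponent A : R)) :
    Nat.card ((R ⧸ nilradical R)ˣ →* A) = Nat.card (Rˣ →* A) := by
  let π := Ideal.Quotient.mk (nilradical R)
  let πUnits : Rˣ →* (R ⧸ nilradical R)ˣ := Units.map π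
  have hπ_local : IsLocalHom π :=
    isLocalHom_of_le_jacobson_bot _ (Ideal.jacobson_bot (R := R) ▸ nilradical_le_jacobson R)
  have hπ_surj : Function.Surjective πUnits :=
    IsLocalRing.surjective_units_map_of_local_ringHom π Ideal.Quotient.mk_surjective hπ_local
  have hker (ψ : Rˣ →* A) : πUnits.ker ≤ ψ.ker := by
    intro u hu
    have hu_nil : IsNilpotent ((u : R) - 1) := by
      rw [← mem_nilradical, ← Ideal.Quotient.mk_eq_mk_iff_sub_mem]
      exact congrArg Units.val hu
    obtain ⟨v, rfl⟩ := exists_units_pow_eq_of_isNilpotent_sub_one hA hu_nil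
    rw [MonoidHom.mem_ker, map_pow, Monoid.pow_exponent_eq_one]
  rw [← Nat.card_congr (πUnits.liftOfSurjective hπ_surj),
    Nat.card_congr (Equiv.subtypeUnivEquiv hker)]

theorem natCast_notMem_of_dvd_natCard_quotient_sub_one {n : ℕ} {I : Ideal R} [Finite (R ⧸ I)]
    (hI : I ≠ ⊤) (h : n ∣ Nat.card (R ⧸ I) - 1) : (n : R) ∉ I := by
  intro hnI
  obtain ⟨k, hk⟩ := h
  have hn : (n : R ⧸ I) = 0 := by simpa using Ideal.Quotient.eq_zero_iff_mem.2 hnI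
  have hcard : Nat.card (R ⧸ I) = n * k + 1 := by rw [← hk, Nat.sub_add_cancel Nat.card_pos]
  have hone : (1 : R ⧸ I) = 0 :=
    calc (1 : R ⧸ I)
      _ = ((n * k + 1 : ℕ) : R ⧸ I) := by simp [hn]
      _ = (Nat.card (R ⧸ I) : R ⧸ I) := by rw [hcard]
      _ = 0 := Ideal.Quotient.index_eq_zero I
  have := Ideal.Quotient.nontrivial_iff.2 hI
  exact one_ne_zero hone

theorem natCard_units_monoidHom [Finite R] {A : Type*} [CommGroup A]
    (h : ∀ (m : Ideal R) [m.IsMaximal], Monoid.exponent A ∣ Nat.card (R ⧸ m) - 1) :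
    Nat.card (Rˣ →* A) = Nat.card A ^ Nat.card (MaximalSpectrum R) := by
  classical
  have := Fintype.ofFinite (MaximalSpectrum R)
  have hfin (m : Ideal R) : Finite (R ⧸ m) := .of_surjective _ Ideal.Quotient.mk_surjective
  have hunit : IsUnit (Monoid.exponent A : R) := by
    by_contra hn
    obtain ⟨m, hm, hnm⟩ := exists_max_ideal_of_mem_nonunits hn
    exact natCast_notMem_of_dvd_natCard_quotient_sub_one hm.ne_top (h m) hnm
  have hres (m : MaximalSpectrum R) : Nat.card ((R ⧸ m.asIdeal)ˣ →* A) = Nat.card A := by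
    let _ := Ideal.Quotient.field m.asIdeal
    exact natCard_monoidHom_of_isCyclic (by simpa only [Nat.card_units] using h m.asIdeal)
  let e : (R ⧸ nilradical R)ˣ ≃* ∀ m : MaximalSpectrum R, (R ⧸ m.asIdeal)ˣ :=
    (Units.mapEquiv (IsArtinianRing.quotNilradicalEquivPi R).toMulEquiv).trans MulEquiv.piUnits
  calc Nat.card (Rˣ →* A)
    _ = Nat.card ((R ⧸ nilradical R)ˣ →* A) :=
      (natCard_units_quotient_nilradical_monoidHom hunit).symm
    _ = Nat.card (∀ m : MaximalSpectrum R, (R ⧸ m.asIdeal)ˣ →* A) :=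
      Nat.card_congr (e.monoidHomCongrLeftEquiv.trans (Pi.monoidHomMulEquiv _ A).toEquiv)
    _ = Nat.card A ^ Nat.card (MaximalSpectrum R) := by
      simp only [Nat.card_pi, hres, Finset.prod_const, Finset.card_univ, Nat.card_eq_fintype_card]

end CommRing

section Polynomial

variable {F : Type*} [Field F]

theorem finite_polynomial_quotient_span_singleton [Finite F] {f : F[X]} (hf : f ≠ 0) :
    Finite (F[X] ⧸ Ideal.span {f}) :=
  have : Module.Finite F (F[X] ⧸ Ideal.span {f}) := (AdjoinRoot.powerBasis hf).finite
  Module.finite_of_finite F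

theorem exists_monic_irreducible_span_singleton_eq {P : Ideal F[X]} [hP : P.IsPrime]
    (hP0 : P ≠ ⊥) : ∃ g : F[X], g.Monic ∧ Irreducible g ∧ Ideal.span {g} = P := by
  classical
  obtain ⟨p, rfl⟩ := IsPrincipalIdealRing.principal P
  rw [Ideal.submodule_span_eq] at hP hP0 ⊢
  have hp0 : p ≠ 0 := by simpa using hP0
  have hp : Irreducible p := ((Ideal.span_singleton_prime hp0).1 hP).irreducible
  have hassoc : Associated (normalize p) p := normalize_associated p
  exact ⟨normalize p, monic_normalize hp0, hassoc.symm.irreducible hp,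
    Ideal.span_singleton_eq_span_singleton.2 hassoc⟩

theorem natCard_primeSpectrum_polynomial_quotient_span_singleton {f : F[X]} (hf : f ≠ 0) :
    Nat.card (PrimeSpectrum (F[X] ⧸ Ideal.span {f})) =
      Nat.card {g : F[X] // g.Monic ∧ Irreducible g ∧ g ∣ f} := by
  rw [Nat.card_congr (Ideal.span {f}).primeSpectrumQuotientOrderIsoZeroLocus.toEquiv]
  let φ (g : {g : F[X] // g.Monic ∧ Irreducible g ∧ g ∣ f}) :
      PrimeSpectrum.zeroLocus (Ideal.span {f} : Set F[X]) :=
    ⟨⟨Ideal.span {g.1}, (Ideal.span_singleton_prime g.2.2.1.ne_zero).2 g.2.2.1.prime⟩,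
      Ideal.span_singleton_le_span_singleton.2 g.2.2.2⟩
  refine (Nat.card_eq_of_bijective φ ⟨fun g h hgh => ?_, fun ⟨P, hfP⟩ => ?_⟩).symm
  · have hspan : Ideal.span {g.1} = Ideal.span {h.1} := congrArg (fun P => P.1.asIdeal) hgh
    exact Subtype.ext (eq_of_monic_of_associated g.2.1 h.2.1
      (Ideal.span_singleton_eq_span_singleton.1 hspan))
  · have hle : Ideal.span {f} ≤ P.asIdeal := hfP
    have hP0 : P.asIdeal ≠ ⊥ :=
      ne_bot_of_le_ne_bot (mt Ideal.span_singleton_eq_bot.1 hf) hle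
    obtain ⟨g, hg_monic, hg_irr, hgP⟩ := exists_monic_irreducible_span_singleton_eq hP0
    have hgf : g ∣ f := Ideal.span_singleton_le_span_singleton.1 (hle.trans hgP.ge)
    exact ⟨⟨g, hg_monic, hg_irr, hgf⟩, Subtype.ext (PrimeSpectrum.ext hgP)⟩

end Polynomial

theorem stmt_8_general {F A : Type*} [Field F] [Finite F] [CommGroup A]
    (hA : Monoid.exponent A ∣ Nat.card F - 1) {f : F[X]} (hf : f ≠ 0) :
    Nat.card ((F[X] ⧸ Ideal.span {f})ˣ →* A) =
      Nat.card A ^ Nat.card {g : F[X] // g.Monic ∧ Irreducible g ∧ g ∣ f} := by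
  have := finite_polynomial_quotient_span_singleton hf
  have hres (m : Ideal (F[X] ⧸ Ideal.span {f})) [m.IsMaximal] :
      Monoid.exponent A ∣ Nat.card ((F[X] ⧸ Ideal.span {f}) ⧸ m) - 1 := by
    rw [Module.natCard_eq_pow_finrank (K := F)]
    exact hA.trans (Nat.sub_one_dvd_pow_sub_one _ _)
  rw [natCard_units_monoidHom hres,
    ← Nat.card_congr IsArtinianRing.primeSpectrumEquivMaximalSpectrum,
    natCard_primeSpectrum_polynomial_quotient_span_singleton hf]

/-- From the proof of Lemma 2.4: if `ℓ` is a prime dividing `q - 1` and `f ∈ 𝔽_q[t]` is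
nonzero with exactly `r` distinct monic irreducible factors, then the number of group
homomorphisms `(𝔽_q[t]/(f))ˣ → ℤ/ℓℤ` is `ℓ^r`. -/
theorem stmt_8 (q ℓ : ℕ) (hℓ : ℓ.Prime) (hdvd : ℓ ∣ q - 1)
    (Fq : Type) [Field Fq] [Fintype Fq] (hcard : Fintype.card Fq = q)
    (f : Fq[X]) (hf : f ≠ 0) (r : ℕ)
    (hr : r = Nat.card {g : Fq[X] // g.Monic ∧ Irreducible g ∧ g ∣ f}) :
    Nat.card ((Fq[X] ⧸ Ideal.span {f})ˣ →* Multiplicative (ZMod ℓ)) = ℓ ^ r := by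
  have hexp : Monoid.exponent (Multiplicative (ZMod ℓ)) ∣ Nat.card Fq - 1 := by
    simpa [ZMod.exponent, hcard] using hdvd
  simpa [hr, Nat.card_congr Multiplicative.toAdd] using stmt_8_general hexp hf
end

section
/- Let 𝔽_q be a finite field, m ≥ 1, and let f ∈ 𝔽_q[t][x₁,…,x_m] be a polynomial that is squarefree when viewed as an element of 𝔽_q(t)[x₁,…,x_m]. Let P be a finite set of monic irreducible polynomials of 𝔽_q[t]. For each monic irreducible π ∉ P, let c_π denote the number of m-tuples x ∈ (𝔽_q[t]/(π²))^m with f(x) = 0 in 𝔽_q[t]/(π²). Then the infinite product ∏_{π ∉ P} (1 − c_π / q^{2m·deg π}) over monic irreducibles π ∉ P converges, and the density lim_{n→∞} (1/q^{nm}) · #{ x = (x₁,…,x_m) ∈ (𝔽_q[t])^m : deg x_i < n for all i, and π² does not divide f(x) for any monic irreducible π ∉ P } exists and equals this product. -/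
open Polynomial Filter

/-!
By the Chinese remainder theorem, imposing `π ^ 2 ∤ f(x)` for finitely many `π` gives exactly the
product of the local factors, so everything rests on a tail estimate: the tuples `x` for which
`π ^ 2 ∣ f(x)` with `π` of degree at least `M` have upper density tending to `0` as `M → ∞`.

In characteristic `p` every tuple can be written `x_j = ∑_{i < p} t ^ i * y_{i,j} ^ p`, and
`f(x) = Φ(y ^ p)` for a polynomial `Φ` obtained from `f` by a shear. Since `p`-th powers have
derivative zero, the `t`-derivative of `f(x)` is `Ψ(y ^ p)`, where `Ψ` is `Φ` with its coefficients
differentiated. Thus `π ^ 2 ∣ f(x)` forces `π` to divide both `Φ(y ^ p)` and `Ψ(y ^ p)`; and `Φ`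
and `Ψ` have no common factor because `f` is squarefree, a polynomial all of whose derivatives
vanish being a `p`-th power. Eliminating one variable at a time, as in Ekedahl's sieve, then shows
that such a `y` is rare.
-/

namespace SquarefreeSieve

section Proportion

open scoped BigOperators

variable {α β : Type*}

/-- The proportion of elements of the finite type `α` that satisfy `p`. -/
noncomputable def proportion (p : α → Prop) : ℝ := Nat.card {a // p a} / Nat.card α

theorem proportion_nonneg (p : α → Prop) : 0 ≤ proportion p := by
  unfold proportion
  positivity

theorem proportion_mono [Finite α] {p r : α → Prop} (h : ∀ a, p a → r a) :
    proportion p ≤ proportion r :=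
  div_le_div_of_nonneg_right
    (by exact_mod_cast Nat.card_le_card_of_injective _ (Subtype.impEmbedding p r h).injective)
    (Nat.cast_nonneg _)

theorem proportion_le_one [Finite α] (p : α → Prop) : proportion p ≤ 1 :=
  div_le_one_of_le₀ (by exact_mod_cast Finite.card_subtype_le p) (Nat.cast_nonneg _)

theorem proportion_eq_expect [Fintype α] (p : α → Prop) [DecidablePred p] :
    proportion p = 𝔼 a, if p a then (1 : ℝ) else 0 := by
  rw [Fintype.expect_eq_sum_div_card, Finset.sum_boole, proportion, Nat.card_eq_fintype_card,
    Nat.card_eq_fintype_card, Fintype.card_subtype]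

theorem proportion_or_le [Finite α] (p r : α → Prop) :
    proportion (fun a => p a ∨ r a) ≤ proportion p + proportion r := by
  classical
  have := Fintype.ofFinite α
  simp only [proportion_eq_expect, ← Finset.expect_add_distrib]
  refine Finset.expect_le_expect fun a _ => ?_
  by_cases hp : p a <;> by_cases hr : r a <;> simp [hp, hr]

theorem proportion_exists_mem_le [Finite α] {κ : Type*} (s : Finset κ) (p : κ → α → Prop) :
    proportion (fun a => ∃ k ∈ s, p k a) ≤ ∑ k ∈ s, proportion (p k) := by
  classical
  induction s using Finset.induction_on with
  | empty => simp [proportion]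
  | insert k s hk ih =>
    simp only [Finset.exists_mem_insert, Finset.sum_insert hk]
    exact (proportion_or_le _ _).trans (add_le_add_right ih _)

theorem proportion_not [Finite α] [Nonempty α] (p : α → Prop) :
    proportion (fun a => ¬ p a) = 1 - proportion p := by
  classical
  have := Fintype.ofFinite α
  have hα : (Fintype.card α : ℝ) ≠ 0 := by exact_mod_cast Fintype.card_ne_zero
  simp only [proportion, Nat.card_eq_fintype_card, Fintype.card_subtype_compl,
    Nat.cast_sub (Fintype.card_subtype_le p), sub_div, div_self hα]

theorem proportion_comp_equiv (e : α ≃ β) (p : β → Prop) :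
    proportion (fun a => p (e a)) = proportion p := by
  rw [proportion, proportion, Nat.card_congr e, Nat.card_congr (e.subtypeEquiv fun _ => Iff.rfl)]

theorem proportion_forall {κ : Type*} [Fintype κ] {γ : κ → Type*} (p : ∀ k, γ k → Prop) :
    proportion (fun a : ∀ k, γ k => ∀ k, p k (a k)) = ∏ k, proportion (p k) := by
  simp only [proportion]
  rw [Nat.card_congr Equiv.subtypePiEquivPi, Nat.card_pi, Nat.card_pi, Finset.prod_div_distrib,
    Nat.cast_prod, Nat.cast_prod]

theorem proportion_comp_of_surjective {G H : Type*} [AddGroup G] [AddGroup H] [Finite G]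
    {φ : G →+ H} (hφ : Function.Surjective φ) (p : H → Prop) :
    proportion (fun g => p (φ g)) = proportion p := by
  classical
  have := Fintype.ofFinite G
  have : Finite H := .of_surjective φ hφ
  have := Fintype.ofFinite H
  let κ := Finset.card {g | φ g = 0}
  have card_preimage (r : H → Prop) :
      Fintype.card {g // r (φ g)} = Fintype.card {h // r h} * κ := by
    have hfib (h : H) : Finset.card {g | φ g = h} = κ :=
      AddMonoidHom.card_fiber_eq_of_mem_range φ (hφ h) ⟨0, map_zero φ⟩
    have := Finset.sum_card_fiberwise_eq_card_filter (Finset.univ : Finset G)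
      ({h | r h} : Finset H) φ
    simpa [Fintype.card_subtype, hfib] using this.symm
  have hκ : (κ : ℝ) ≠ 0 := by
    exact_mod_cast Finset.card_ne_zero.mpr ⟨0, by simp⟩
  have hG : Fintype.card G = Fintype.card H * κ := by
    simpa using card_preimage fun _ => True
  simp only [proportion, Nat.card_eq_fintype_card, card_preimage, hG, Nat.cast_mul]
  exact mul_div_mul_right _ _ hκ

theorem proportion_fin_cons [Fintype α] {n : ℕ} (p : (Fin (n + 1) → α) → Prop) :
    proportion p = 𝔼 y : Fin n → α, proportion fun a => p (Fin.cons a y) := by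
  classical
  simp only [proportion_eq_expect]
  rw [Finset.expect_comm, ← Finset.expect_product', Finset.univ_product_univ]
  exact (Fintype.expect_equiv (Fin.consEquiv fun _ => α) _ _ fun _ => rfl).symm

theorem proportion_le_mul_of_injective [Finite β] [Nonempty β] {p : α → Prop} {r : β → Prop}
    {g : α → β} (hg : Function.Injective g) (h : ∀ a, p a → r (g a)) :
    proportion p ≤ Nat.card β / Nat.card α * proportion r := by
  have hβ : (Nat.card β : ℝ) ≠ 0 := by exact_mod_cast Nat.card_pos.ne'
  have hcard : Nat.card {a // p a} ≤ Nat.card {b // r b} :=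
    Nat.card_le_card_of_injective (Subtype.map g h) (Subtype.map_injective h hg)
  rw [proportion, proportion, div_mul_div_comm, mul_comm (Nat.card β : ℝ) _,
    mul_div_mul_right _ _ hβ]
  exact div_le_div_of_nonneg_right (by exact_mod_cast hcard) (Nat.cast_nonneg _)

end Proportion

section SchwartzZippel

variable {α R : Type*} [CommRing R] [IsDomain R] {g : α → R}

theorem proportion_eval_eq_zero_le [Finite α] (hg : Function.Injective g) {n : ℕ}
    {f : MvPolynomial (Fin n) R} (hf : f ≠ 0) :
    proportion (fun a : Fin n → α => MvPolynomial.eval (fun i => g (a i)) f = 0) ≤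
      f.totalDegree / Nat.card α := by
  classical
  have := Fintype.ofFinite α
  let S : Finset R := Finset.univ.image g
  have hS : S.card = Nat.card α := by
    rw [Finset.card_image_of_injective _ hg, Finset.card_univ, Nat.card_eq_fintype_card]
  have hcard : Nat.card {a : Fin n → α // MvPolynomial.eval (fun i => g (a i)) f = 0} ≤
      Finset.card {x ∈ Fintype.piFinset fun _ => S | MvPolynomial.eval x f = 0} := by
    rw [Nat.card_eq_fintype_card, Fintype.card_subtype]
    refine Finset.card_le_card_of_injOn (fun a i => g (a i)) (fun a ha => ?_)
      (hg.comp_left.injOn)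
    simpa [S] using ha
  have schwartz_zippel : (_ : ℝ) ≤ _ :=
    NNRat.cast_le.mpr (MvPolynomial.schwartz_zippel_totalDegree hf S)
  rw [hS] at schwartz_zippel
  push_cast at schwartz_zippel
  refine le_trans ?_ schwartz_zippel
  rw [proportion, Nat.card_fun, Nat.card_fin, Nat.cast_pow]
  gcongr

theorem proportion_polynomial_eval_eq_zero_le (hg : Function.Injective g) {f : R[X]}
    (hf : f ≠ 0) :
    proportion (fun a => f.eval (g a) = 0) ≤ f.natDegree / Nat.card α := by
  have hcard : {a | f.eval (g a) = 0}.ncard ≤ f.natDegree :=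
    (Set.ncard_le_ncard_of_injOn g (t := f.rootSet R)
      (fun a ha => mem_rootSet.mpr ⟨hf, by simpa using ha⟩) hg.injOn
      (f.rootSet_finite R)).trans (f.ncard_rootSet_le R)
  exact div_le_div_of_nonneg_right (by exact_mod_cast hcard) (Nat.cast_nonneg _)

end SchwartzZippel

section Box

variable {F : Type*} [Field F]

theorem natCard_degreeLT (n : ℕ) : Nat.card (degreeLT F n) = Nat.card F ^ n := by
  rw [Nat.card_congr (degreeLTEquiv F n).toEquiv, Nat.card_fun, Nat.card_fin]

instance [Finite F] (n : ℕ) : Finite (degreeLT F n) :=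
  .of_equiv _ (degreeLTEquiv F n).symm.toEquiv

theorem natCard_quotient_span {D : F[X]} (hD : D ≠ 0) :
    Nat.card (F[X] ⧸ Ideal.span {D}) = Nat.card F ^ D.natDegree := by
  have : Module.Finite F (F[X] ⧸ Ideal.span {D}) := (AdjoinRoot.powerBasis hD).finite
  rw [Module.natCard_eq_pow_finrank (K := F), finrank_quotient_span_eq_natDegree]

theorem finite_quotient_span [Finite F] {D : F[X]} (hD : D ≠ 0) :
    Finite (F[X] ⧸ Ideal.span {D}) := by
  have : Module.Finite F (F[X] ⧸ Ideal.span {D}) := (AdjoinRoot.powerBasis hD).finite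
  exact Module.finite_of_finite F

/-- Reduction modulo `D` on polynomials of degree less than `n`. -/
noncomputable def reduce (D : F[X]) (n : ℕ) : degreeLT F n →+ F[X] ⧸ Ideal.span {D} :=
  (Ideal.Quotient.mk (Ideal.span {D}) : F[X] →+ _).comp (degreeLT F n).subtype.toAddMonoidHom

theorem reduce_apply (D : F[X]) {n : ℕ} (x : degreeLT F n) :
    reduce D n x = Ideal.Quotient.mk _ (x : F[X]) := rfl

theorem reduce_surjective {D : F[X]} (hD : D ≠ 0) {n : ℕ} (hn : D.natDegree ≤ n) :
    Function.Surjective (reduce D n) := by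
  intro z
  obtain ⟨r, rfl⟩ := Ideal.Quotient.mk_surjective z
  refine ⟨⟨r % D, mem_degreeLT.mpr ?_⟩, ?_⟩
  · exact (EuclideanDomain.mod_lt r hD).trans_le (degree_le_of_natDegree_le hn)
  · rw [reduce_apply, Ideal.Quotient.mk_eq_mk_iff_sub_mem, Ideal.mem_span_singleton]
    exact (dvd_sub_comm.mp ⟨r / D, (eq_sub_iff_add_eq'.mpr (EuclideanDomain.mod_add_div r D)).symm⟩)

theorem reduce_injective {D : F[X]} (hD : D ≠ 0) {n : ℕ} (hn : n ≤ D.natDegree) :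
    Function.Injective (reduce D n) := by
  refine (injective_iff_map_eq_zero _).mpr fun x hx => ?_
  rw [reduce_apply, Ideal.Quotient.eq_zero_iff_dvd] at hx
  have hdeg : (x : F[X]).degree < D.degree :=
    (mem_degreeLT.mp x.2).trans_le (by rw [degree_eq_natDegree hD]; exact_mod_cast hn)
  exact Subtype.ext (eq_zero_of_dvd_of_degree_lt hx hdeg)

/-- The proportion of tuples satisfying `p` among the tuples of polynomials of degree `< n`. -/
noncomputable def boxProportion {σ : Type*} (n : ℕ) (p : (σ → F[X]) → Prop) : ℝ :=
  proportion fun x : σ → degreeLT F n => p fun i => x i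

theorem boxProportion_eq_natCard_div {σ : Type*} [Finite σ] (n : ℕ)
    (p : (σ → F[X]) → Prop) :
    boxProportion n p = Nat.card {x : σ → F[X] // (∀ i, (x i).degree < n) ∧ p x} /
      (Nat.card F : ℝ) ^ (n * Nat.card σ) := by
  have e : {x : σ → degreeLT F n // p fun i => x i} ≃
      {x : σ → F[X] // (∀ i, (x i).degree < n) ∧ p x} :=
    { toFun := fun x => ⟨fun i => x.1 i, fun i => mem_degreeLT.mp (x.1 i).2, x.2⟩
      invFun := fun x => ⟨fun i => ⟨x.1 i, mem_degreeLT.mpr (x.2.1 i)⟩, x.2.2⟩ }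
  rw [boxProportion, proportion, Nat.card_congr e, Nat.card_fun, natCard_degreeLT, ← pow_mul,
    Nat.cast_pow]

theorem boxProportion_mono [Finite F] {σ : Type*} [Finite σ] {n : ℕ} {p r : (σ → F[X]) → Prop}
    (h : ∀ x, p x → r x) : boxProportion n p ≤ boxProportion n r :=
  proportion_mono fun _ => h _

theorem boxProportion_or_le [Finite F] {σ : Type*} [Finite σ] (n : ℕ)
    (p r : (σ → F[X]) → Prop) :
    boxProportion n (fun x => p x ∨ r x) ≤ boxProportion n p + boxProportion n r :=
  proportion_or_le _ _

theorem boxProportion_comp_equiv {σ τ : Type*} (φ : σ ≃ τ) (n : ℕ) (p : (σ → F[X]) → Prop) :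
    boxProportion n (fun x => p (x ∘ φ)) = boxProportion n p :=
  proportion_comp_equiv (φ.symm.arrowCongr (Equiv.refl (degreeLT F n))) fun x => p fun i => x i

theorem boxProportion_forall_mk {κ σ : Type*} [Fintype κ] [Finite F] [Finite σ] {D : κ → F[X]}
    (hD : ∀ k, D k ≠ 0) (hcop : Pairwise fun k l => IsCoprime (D k) (D l)) {n : ℕ}
    (hn : (∏ k, D k).natDegree ≤ n) (p : ∀ k, (σ → F[X] ⧸ Ideal.span {D k}) → Prop) :
    boxProportion n (fun x => ∀ k, p k fun i => Ideal.Quotient.mk _ (x i)) =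
      ∏ k, proportion (p k) := by
  let φ : (σ → degreeLT F n) →+ ∀ k, σ → F[X] ⧸ Ideal.span {D k} :=
    AddMonoidHom.mk' (fun x k i => reduce (D k) n (x i)) fun _ _ => by ext; simp
  have hφ : Function.Surjective φ := by
    intro z
    have lift (i : σ) : ∃ x : degreeLT F n, ∀ k, reduce (D k) n x = z k i := by
      have hcop' : Pairwise fun k l => IsCoprime (Ideal.span {D k}) (Ideal.span {D l}) :=
        fun k l hkl => (Ideal.isCoprime_span_singleton_iff _ _).mpr (hcop hkl)
      obtain ⟨r, hr⟩ := Ideal.pi_quotient_surjective hcop' fun k => z k i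
      obtain ⟨x, hx⟩ := reduce_surjective (Finset.prod_ne_zero_iff.mpr fun k _ => hD k) hn
        (Ideal.Quotient.mk _ r)
      refine ⟨x, fun k => ?_⟩
      rw [reduce_apply, Ideal.Quotient.mk_eq_mk_iff_sub_mem, Ideal.mem_span_singleton] at hx
      rw [← hr k, reduce_apply, Ideal.Quotient.mk_eq_mk_iff_sub_mem, Ideal.mem_span_singleton]
      exact (Finset.dvd_prod_of_mem D (Finset.mem_univ k)).trans hx
    choose x hx using lift
    exact ⟨x, funext fun k => funext fun i => hx i k⟩
  rw [← proportion_forall]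
  exact proportion_comp_of_surjective hφ fun z => ∀ k, p k (z k)

theorem boxProportion_mk {σ : Type*} [Finite F] [Finite σ] {D : F[X]} (hD : D ≠ 0) {n : ℕ}
    (hn : D.natDegree ≤ n) (p : (σ → F[X] ⧸ Ideal.span {D}) → Prop) :
    boxProportion n (fun x => p fun i => Ideal.Quotient.mk _ (x i)) = proportion p := by
  simpa using boxProportion_forall_mk (κ := Unit) (fun _ => hD) (Subsingleton.pairwise) (n := n)
    (by simpa using hn) fun _ => p

theorem dvd_mvPolynomial_eval_iff {R σ : Type*} [CommRing R] {D : R} {f : MvPolynomial σ R}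
    {x : σ → R} :
    D ∣ MvPolynomial.eval x f ↔
      MvPolynomial.eval (fun i => Ideal.Quotient.mk (Ideal.span {D}) (x i))
        (MvPolynomial.map (Ideal.Quotient.mk (Ideal.span {D})) f) = 0 := by
  rw [← Ideal.Quotient.eq_zero_iff_dvd, MvPolynomial.map_eval]
  rfl

theorem dvd_polynomial_eval_iff {R : Type*} [CommRing R] {D : R} {f : R[X]} {x : R} :
    D ∣ f.eval x ↔
      (f.map (Ideal.Quotient.mk (Ideal.span {D}))).eval (Ideal.Quotient.mk _ x) = 0 := by
  rw [← Ideal.Quotient.eq_zero_iff_dvd, eval_map_apply]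

theorem isDomain_quotient_span {π : F[X]} (hπ : Irreducible π) :
    IsDomain (F[X] ⧸ Ideal.span {π}) :=
  have := (Ideal.span_singleton_prime hπ.ne_zero).mpr hπ.prime
  Ideal.Quotient.isDomain _

theorem totalDegree_map_le {σ R S : Type*} [CommSemiring R] [CommSemiring S] (φ : R →+* S)
    (f : MvPolynomial σ R) : (MvPolynomial.map φ f).totalDegree ≤ f.totalDegree :=
  Finset.sup_mono (MvPolynomial.support_map_subset φ f)

variable [Finite F]

theorem boxProportion_eval_eq_zero_le {N : ℕ} {f : MvPolynomial (Fin N) F[X]} (hf : f ≠ 0)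
    (n : ℕ) :
    boxProportion n (fun x => MvPolynomial.eval x f = 0) ≤
      f.totalDegree / (Nat.card F : ℝ) ^ n := by
  have := proportion_eval_eq_zero_le (Subtype.val_injective (p := (· ∈ degreeLT F n))) hf
  rwa [natCard_degreeLT, Nat.cast_pow] at this

theorem boxProportion_dvd_eval_le {N : ℕ} {f : MvPolynomial (Fin N) F[X]} {π : F[X]}
    (hπ : Irreducible π) (hf : MvPolynomial.map (Ideal.Quotient.mk (Ideal.span {π})) f ≠ 0)
    {n : ℕ} (hn : π.natDegree ≤ n) :
    boxProportion n (fun x => π ∣ MvPolynomial.eval x f) ≤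
      f.totalDegree / (Nat.card F : ℝ) ^ π.natDegree := by
  have := isDomain_quotient_span hπ
  have := finite_quotient_span hπ.ne_zero
  simp only [dvd_mvPolynomial_eval_iff]
  rw [boxProportion_mk hπ.ne_zero hn fun z => MvPolynomial.eval z (MvPolynomial.map _ f) = 0]
  refine (proportion_eval_eq_zero_le Function.injective_id hf).trans ?_
  rw [natCard_quotient_span hπ.ne_zero, Nat.cast_pow]
  gcongr
  exact totalDegree_map_le _ f

theorem proportion_dvd_polynomial_eval_le {f : F[X][X]} {π : F[X]} (hπ : Irreducible π)
    (hf : f.map (Ideal.Quotient.mk (Ideal.span {π})) ≠ 0) (n : ℕ) :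
    proportion (fun x : degreeLT F n => π ∣ f.eval (x : F[X])) ≤
      f.natDegree / (Nat.card F : ℝ) ^ min n π.natDegree := by
  have := isDomain_quotient_span hπ
  have := finite_quotient_span hπ.ne_zero
  simp only [dvd_polynomial_eval_iff, ← reduce_apply]
  have hdeg : ((f.map (Ideal.Quotient.mk (Ideal.span {π}))).natDegree : ℝ) ≤ f.natDegree :=
    Nat.cast_le.mpr natDegree_map_le
  obtain hn | hn := le_total n π.natDegree
  · refine (proportion_polynomial_eval_eq_zero_le (reduce_injective hπ.ne_zero hn) hf).trans ?_
    rw [natCard_degreeLT, Nat.cast_pow, min_eq_left hn]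
    gcongr
  · rw [proportion_comp_of_surjective (reduce_surjective hπ.ne_zero hn)
      fun z => (f.map (Ideal.Quotient.mk (Ideal.span {π}))).eval z = 0]
    refine (proportion_polynomial_eval_eq_zero_le Function.injective_id hf).trans ?_
    rw [natCard_quotient_span hπ.ne_zero, Nat.cast_pow, min_eq_right hn]
    gcongr

end Box

section Primes

variable {F : Type*} [Field F]

theorem exists_natDegree_eval_le {R σ : Type*} [CommSemiring R] (f : MvPolynomial σ R[X]) :
    ∃ L : ℕ, ∀ n > 0, ∀ x : σ → R[X], (∀ i, (x i).natDegree ≤ n) →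
      (MvPolynomial.eval x f).natDegree ≤ L * n := by
  induction f using MvPolynomial.induction_on with
  | C a =>
    exact ⟨a.natDegree, fun n hn x _ => by
      simpa only [MvPolynomial.eval_C] using Nat.le_mul_of_pos_right _ hn⟩
  | add f g hf hg =>
    obtain ⟨K, hK⟩ := hf
    obtain ⟨L, hL⟩ := hg
    refine ⟨max K L, fun n hn x hx => ?_⟩
    rw [map_add, max_mul_of_nonneg _ _ n.zero_le]
    exact (natDegree_add_le _ _).trans (max_le_max (hK n hn x hx) (hL n hn x hx))
  | mul_X f i hf =>
    obtain ⟨L, hL⟩ := hf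
    refine ⟨L + 1, fun n hn x hx => ?_⟩
    rw [map_mul, MvPolynomial.eval_X, add_one_mul]
    exact natDegree_mul_le.trans (add_le_add (hL n hn x hx) (hx i))

theorem isCoprime_of_monic_of_irreducible {π ρ : F[X]} (hπ : π.Monic) (hπ' : Irreducible π)
    (hρ : ρ.Monic) (hρ' : Irreducible ρ) (h : π ≠ ρ) : IsCoprime π ρ :=
  hπ'.coprime_iff_not_dvd.mpr fun hdvd =>
    h (eq_of_monic_of_associated hπ hρ (hπ'.associated_of_dvd hρ' hdvd))

theorem card_mul_le_natDegree {s : Finset F[X]} {r : F[X]} (hr : r ≠ 0) {n : ℕ}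
    (hs : ∀ π ∈ s, (π.Monic ∧ Irreducible π) ∧ π ∣ r ∧ n ≤ π.natDegree) :
    s.card * n ≤ r.natDegree := by
  have hdvd : ∏ π ∈ s, π ∣ r :=
    Finset.prod_dvd_of_coprime (fun π hπ ρ hρ => isCoprime_of_monic_of_irreducible
      (hs π hπ).1.1 (hs π hπ).1.2 (hs ρ hρ).1.1 (hs ρ hρ).1.2) fun π hπ => (hs π hπ).2.1
  calc s.card * n ≤ ∑ π ∈ s, π.natDegree :=
        s.card_nsmul_le_sum _ _ fun π hπ => (hs π hπ).2.2
    _ = (∏ π ∈ s, π).natDegree := (natDegree_prod _ _ fun π hπ => (hs π hπ).1.2.ne_zero).symm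
    _ ≤ r.natDegree := natDegree_le_of_dvd hdvd hr

theorem exists_forall_map_mk_ne_zero {σ : Type*} {f : MvPolynomial σ F[X]} (hf : f ≠ 0) :
    ∃ M : ℕ, ∀ π : F[X], M ≤ π.natDegree →
      MvPolynomial.map (Ideal.Quotient.mk (Ideal.span {π})) f ≠ 0 := by
  obtain ⟨s, hs⟩ := MvPolynomial.ne_zero_iff.mp hf
  refine ⟨(f.coeff s).natDegree + 1, fun π hπ h0 => ?_⟩
  have hdvd := congrArg (MvPolynomial.coeff s) h0
  rw [MvPolynomial.coeff_map, MvPolynomial.coeff_zero, Ideal.Quotient.eq_zero_iff_dvd] at hdvd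
  exact (natDegree_le_of_dvd hdvd hs).not_gt hπ

variable [Finite F]

theorem finite_setOf_degree_lt (n : ℕ) : {f : F[X] | f.degree < n}.Finite :=
  (Set.finite_range ((↑) : degreeLT F n → F[X])).subset fun f hf => ⟨⟨f, mem_degreeLT.mpr hf⟩, rfl⟩

variable (F) in
/-- The primes of `F[X]`, normalized to be monic, whose degree lies in `[M, n)`. -/
noncomputable def primesIco (M n : ℕ) : Finset F[X] :=
  ((finite_setOf_degree_lt n).subset (Set.inter_subset_left
    (t := {π | (π.Monic ∧ Irreducible π) ∧ M ≤ π.natDegree}))).toFinset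

theorem mem_primesIco {M n : ℕ} {π : F[X]} :
    π ∈ primesIco F M n ↔ (π.Monic ∧ Irreducible π) ∧ M ≤ π.natDegree ∧ π.natDegree < n := by
  rw [primesIco, Set.Finite.mem_toFinset, Set.mem_inter_iff, and_comm, Set.mem_ofPred_eq,
    and_assoc]
  refine and_congr_right fun h => and_congr_right fun _ => ?_
  rw [Set.mem_ofPred_eq, degree_eq_natDegree h.1.ne_zero, Nat.cast_lt]

theorem card_monic_natDegree_le (s : Finset F[X]) {k : ℕ}
    (hs : ∀ f ∈ s, f.Monic ∧ f.natDegree = k) : s.card ≤ Nat.card F ^ k := by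
  have : Finite {f : F[X] // f.Monic ∧ f.natDegree = k} :=
    .of_equiv _ (monicEquivDegreeLT k).symm
  rw [← natCard_degreeLT, ← Nat.card_congr (monicEquivDegreeLT k), ← Nat.card_eq_finsetCard s]
  exact Nat.card_le_card_of_injective _ (Subtype.impEmbedding _ _ hs).injective

theorem sum_primesIco_inv_sq_le (M n : ℕ) :
    ∑ π ∈ primesIco F M n, (((Nat.card F : ℝ) ^ π.natDegree) ^ 2)⁻¹ ≤
      2 / (Nat.card F : ℝ) ^ M := by
  have hq : (2 : ℝ) ≤ Nat.card F := by exact_mod_cast Finite.one_lt_card (α := F)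
  set q : ℝ := (Nat.card F : ℝ) with hqdef
  calc ∑ π ∈ primesIco F M n, ((q ^ π.natDegree) ^ 2)⁻¹
      = ∑ k ∈ Finset.Ico M n, ∑ π ∈ primesIco F M n with π.natDegree = k,
          ((q ^ π.natDegree) ^ 2)⁻¹ := by
        refine (Finset.sum_fiberwise_of_maps_to (fun π hπ => ?_) _).symm
        exact Finset.mem_Ico.mpr (mem_primesIco.mp hπ).2
    _ ≤ ∑ k ∈ Finset.Ico M n, q⁻¹ ^ k := by
        refine Finset.sum_le_sum fun k _ => ?_
        have hcard : Finset.card {π ∈ primesIco F M n | π.natDegree = k} ≤ Nat.card F ^ k :=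
          card_monic_natDegree_le _ fun π hπ => by
            rw [Finset.mem_filter, mem_primesIco] at hπ
            exact ⟨hπ.1.1.1, hπ.2⟩
        rw [Finset.sum_congr rfl fun π hπ => by rw [(Finset.mem_filter.mp hπ).2],
          Finset.sum_const, nsmul_eq_mul]
        calc _ ≤ q ^ k * ((q ^ k) ^ 2)⁻¹ := by rw [hqdef]; gcongr; exact_mod_cast hcard
          _ = q⁻¹ ^ k := by rw [inv_pow]; field_simp
    _ ≤ q⁻¹ ^ M / (1 - q⁻¹) :=
        geom_sum_Ico_le_of_lt_one (by positivity) (inv_lt_one_of_one_lt₀ (by linarith))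
    _ ≤ 2 / q ^ M := by
        rw [inv_pow, div_le_div_iff₀ (by linarith [inv_anti₀ two_pos hq]) (by positivity),
          inv_mul_cancel₀ (by positivity)]
        linarith [inv_anti₀ two_pos hq]

end Primes

section Elimination

theorem exists_dvd_of_dvd_map {B K : Type*} [CommRing B] [IsDomain B]
    [UniqueFactorizationMonoid B] [Field K] [Algebra B K] [IsFractionRing B K] {S : Set B[X]}
    {h : K[X]} (hdvd : ∀ f ∈ S, h ∣ f.map (algebraMap B K)) :
    ∃ g : B[X], g.natDegree = h.natDegree ∧ ∀ f ∈ S, g ∣ f := by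
  classical
  let _ : NormalizedGCDMonoid B := Classical.choice inferInstance
  obtain ⟨b, hb, hmap⟩ := IsLocalization.integerNormalization_spec (nonZeroDivisors B) h
  set h' := IsLocalization.integerNormalization (nonZeroDivisors B) h
  have hb0 : algebraMap B K b ≠ 0 := by simpa using nonZeroDivisors.ne_zero hb
  replace hmap : h'.map (algebraMap B K) = C (algebraMap B K b) * h := by
    rw [hmap, ← smul_eq_C_mul, algebraMap_smul]
  refine ⟨h'.primPart, ?_, fun f hf => ?_⟩
  · rw [natDegree_primPart, ← natDegree_map_eq_of_injective (IsFractionRing.injective B K), hmap,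
      natDegree_C_mul hb0]
  · rw [(isPrimitive_primPart h').dvd_iff_fraction_map_dvd_fraction_map K]
    have hunit : IsUnit (C (algebraMap B K b)) := isUnit_C.mpr hb0.isUnit
    calc h'.primPart.map (algebraMap B K) ∣ h'.map (algebraMap B K) :=
          Polynomial.map_dvd _ h'.primPart_dvd
      _ ∣ f.map (algebraMap B K) := hmap ▸ hunit.mul_left_dvd.mpr (hdvd f hf)

theorem exists_ne_zero_C_mem_span {B : Type*} [CommRing B] [IsDomain B]
    [UniqueFactorizationMonoid B] {S : Set B[X]}
    (hS : ∀ g : B[X], (∀ f ∈ S, g ∣ f) → g.natDegree = 0) :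
    ∃ r : B, r ≠ 0 ∧ C r ∈ Ideal.span S := by
  let K := FractionRing B
  let _ : Algebra B[X] K[X] := Polynomial.algebra B K
  have : IsLocalization ((nonZeroDivisors B).map (C : B →+* B[X])) K[X] :=
    Polynomial.isLocalization _ _
  set J := (Ideal.span S).map (algebraMap B[X] K[X])
  obtain ⟨h, hspan⟩ : ∃ h, J = Ideal.span {h} := (IsPrincipalIdealRing.principal J).principal
  have hdvd : ∀ f ∈ S, h ∣ f.map (algebraMap B K) := fun f hf => by
    rw [← Ideal.mem_span_singleton, ← hspan]
    exact Ideal.mem_map_of_mem (algebraMap B[X] K[X]) (Ideal.subset_span hf)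
  have h0 : h ≠ 0 := by
    rintro rfl
    have hX := hS X fun f hf => by
      have : f.map (algebraMap B K) = 0 := zero_dvd_iff.mp (hdvd f hf)
      rw [(Polynomial.map_eq_zero_iff (IsFractionRing.injective B K)).mp this]
      exact dvd_zero X
    exact one_ne_zero (natDegree_X.symm.trans hX)
  obtain ⟨g, hdeg, hg⟩ := exists_dvd_of_dvd_map hdvd
  have hunit : IsUnit h := by
    rw [isUnit_iff_degree_eq_zero, degree_eq_natDegree h0, ← hdeg, hS g hg, Nat.cast_zero]
  have hJtop : J = ⊤ := hspan.trans (Ideal.span_singleton_eq_top.mpr hunit)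
  by_contra! hdisjoint
  refine (IsLocalization.map_algebraMap_ne_top_iff_disjoint
    ((nonZeroDivisors B).map (C : B →+* B[X])) K[X] _).mpr ?_ hJtop
  rw [Set.disjoint_left]
  rintro _ ⟨r, hr, rfl⟩
  exact hdisjoint r (nonZeroDivisors.ne_zero hr)

/-- The members of `S` have no common factor of positive degree. Asking for `a ≠ 0` excludes
`g = 0`, so that not all members of `S` vanish. -/
def HasNoCommonFactor {σ R : Type*} [CommSemiring R] (S : Set (MvPolynomial σ R)) : Prop :=
  ∀ g, (∀ f ∈ S, g ∣ f) → ∃ a ≠ 0, g = MvPolynomial.C a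

/-- The coefficients of the members of `S`, viewed as polynomials in the first variable. -/
def coeffSet {R : Type*} [CommSemiring R] {N : ℕ} (S : Set (MvPolynomial (Fin (N + 1)) R)) :
    Set (MvPolynomial (Fin N) R) :=
  ⋃ f ∈ S, (MvPolynomial.finSuccEquiv R N f).coeffs

theorem finite_coeffSet {R : Type*} [CommSemiring R] {N : ℕ}
    {S : Set (MvPolynomial (Fin (N + 1)) R)} (hS : S.Finite) : (coeffSet S).Finite :=
  hS.biUnion fun _ _ => Finset.finite_toSet _

section

variable {R : Type*} [CommRing R] {N : ℕ} {S : Set (MvPolynomial (Fin (N + 1)) R)}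

theorem HasNoCommonFactor.of_dvd_finSuccEquiv (hS : HasNoCommonFactor S)
    {g : (MvPolynomial (Fin N) R)[X]} (hg : ∀ f ∈ S, g ∣ MvPolynomial.finSuccEquiv R N f) :
    ∃ a ≠ 0, g = C (MvPolynomial.C a) := by
  obtain ⟨a, ha, hga⟩ := hS ((MvPolynomial.finSuccEquiv R N).symm g) fun f hf => by
    rw [← map_dvd_iff (MvPolynomial.finSuccEquiv R N), AlgEquiv.apply_symm_apply]
    exact hg f hf
  refine ⟨a, ha, ?_⟩
  rw [AlgEquiv.symm_apply_eq] at hga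
  exact hga.trans ((MvPolynomial.finSuccEquiv R N).commutes a)

theorem HasNoCommonFactor.coeffSet (hS : HasNoCommonFactor S) :
    HasNoCommonFactor (coeffSet S) := by
  intro g hg
  obtain ⟨a, ha, hga⟩ := hS.of_dvd_finSuccEquiv (g := C g) fun f hf => by
    refine C_dvd_iff_dvd_coeff _ _ |>.mpr fun i => ?_
    by_cases hi : (MvPolynomial.finSuccEquiv R N f).coeff i = 0
    · rw [hi]
      exact dvd_zero g
    · exact hg _ (Set.mem_biUnion hf (coeff_mem_coeffs hi))
  exact ⟨a, ha, C_injective hga⟩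

theorem HasNoCommonFactor.exists_dvd_eval [IsDomain R] [UniqueFactorizationMonoid R]
    (hS : HasNoCommonFactor S) :
    ∃ h : MvPolynomial (Fin N) R, h ≠ 0 ∧ ∀ (π a : R) (x : Fin N → R),
      (∀ f ∈ S, π ∣ MvPolynomial.eval (Fin.cons a x) f) → π ∣ MvPolynomial.eval x h := by
  obtain ⟨h, h0, hspan⟩ := exists_ne_zero_C_mem_span
    (S := MvPolynomial.finSuccEquiv R N '' S) fun g hg => by
      obtain ⟨a, -, rfl⟩ := hS.of_dvd_finSuccEquiv fun f hf => hg _ (Set.mem_image_of_mem _ hf)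
      exact natDegree_C _
  refine ⟨h, h0, fun π a x hπ => ?_⟩
  have hle : Ideal.span (MvPolynomial.finSuccEquiv R N '' S) ≤
      (Ideal.span {π}).comap ((evalRingHom a).comp (mapRingHom (MvPolynomial.eval x))) := by
    rw [Ideal.span_le]
    rintro _ ⟨f, hf, rfl⟩
    have := hπ f hf
    rw [MvPolynomial.eval_eq_eval_mv_eval'] at this
    exact Ideal.mem_comap.mpr (Ideal.mem_span_singleton.mpr this)
  simpa [Ideal.mem_span_singleton] using Ideal.mem_comap.mp (hle hspan)

end

end Elimination

section Ekedahl

variable {F : Type*} [Field F]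

/-- Some monic prime of degree at least `M` divides the values at `x ^ e` of all members of `S`. -/
def HasLargeCommonPrime {σ : Type*} (S : Set (MvPolynomial σ F[X])) (e M : ℕ) (x : σ → F[X]) :
    Prop :=
  ∃ π : F[X], (π.Monic ∧ Irreducible π) ∧ M ≤ π.natDegree ∧
    ∀ f ∈ S, π ∣ MvPolynomial.eval (x ^ e) f

theorem fin_cons_pow {M : Type*} [Monoid M] {N : ℕ} (a : M) (y : Fin N → M) (e : ℕ) :
    (Fin.cons a y : Fin (N + 1) → M) ^ e = Fin.cons (a ^ e) (y ^ e) := by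
  ext i
  cases i using Fin.cases <;> simp

theorem not_hasLargeCommonPrime_coeffSet {N : ℕ} {S : Set (MvPolynomial (Fin (N + 1)) F[X])}
    {e M : ℕ} {y : Fin N → F[X]} (hy : ¬ HasLargeCommonPrime (coeffSet S) e M y) {π : F[X]}
    (hπ : π.Monic ∧ Irreducible π) (hM : M ≤ π.natDegree) :
    ∃ f ∈ S, (MvPolynomial.finSuccEquiv F[X] N f).map
      ((Ideal.Quotient.mk (Ideal.span {π})).comp (MvPolynomial.eval (y ^ e))) ≠ 0 := by
  contrapose! hy
  refine ⟨π, hπ, hM, fun c hc => ?_⟩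
  obtain ⟨f, hf, hcoeff⟩ := Set.mem_iUnion₂.mp hc
  obtain ⟨j, -, rfl⟩ := mem_coeffs_iff.mp hcoeff
  have := congrArg (fun g => g.coeff j) (hy f hf)
  rwa [coeff_map, coeff_zero, RingHom.comp_apply, Ideal.Quotient.eq_zero_iff_dvd] at this

variable [Finite F]

theorem proportion_dvd_eval_cons_pow_le {N e : ℕ} (he : 0 < e)
    (f : MvPolynomial (Fin (N + 1)) F[X]) {π : F[X]} (hπ : Irreducible π) {y : Fin N → F[X]}
    (hy : (MvPolynomial.finSuccEquiv F[X] N f).map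
      ((Ideal.Quotient.mk (Ideal.span {π})).comp (MvPolynomial.eval (y ^ e))) ≠ 0) (n : ℕ) :
    proportion (fun a : degreeLT F n =>
        π ∣ MvPolynomial.eval ((Fin.cons (a : F[X]) y : Fin (N + 1) → F[X]) ^ e) f) ≤
      (f.degreeOf 0 * e : ℕ) / (Nat.card F : ℝ) ^ min n π.natDegree := by
  set g : F[X][X] :=
    expand F[X] e ((MvPolynomial.finSuccEquiv F[X] N f).map (MvPolynomial.eval (y ^ e))) with hg
  have eval_g (a : F[X]) :
      MvPolynomial.eval ((Fin.cons a y : Fin (N + 1) → F[X]) ^ e) f = g.eval a := by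
    rw [fin_cons_pow, MvPolynomial.eval_eq_eval_mv_eval', hg, expand_eval]
  have hg0 : g.map (Ideal.Quotient.mk (Ideal.span {π})) ≠ 0 := by
    rwa [hg, map_expand, Polynomial.map_map, expand_ne_zero he]
  have hdeg : g.natDegree ≤ f.degreeOf 0 * e := by
    rw [hg, natDegree_expand, ← MvPolynomial.natDegree_finSuccEquiv]
    gcongr
    exact natDegree_map_le
  simp only [eval_g]
  refine (proportion_dvd_polynomial_eval_le hπ hg0 n).trans ?_
  gcongr

theorem sum_filter_dvd_div_pow_min_le {K : ℝ} (hK : 0 ≤ K) {L M n : ℕ} (hn : 0 < n) {r : F[X]}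
    (hr : r ≠ 0) (hdeg : r.natDegree ≤ L * n) (T : Finset F[X])
    (hT : ∀ π ∈ T, (π.Monic ∧ Irreducible π) ∧ π ∣ r ∧ M ≤ π.natDegree) [DecidablePred (· ∣ r)] :
    ∑ π ∈ T, K / (Nat.card F : ℝ) ^ min n π.natDegree ≤
      L * K / (Nat.card F : ℝ) ^ n +
        ∑ π ∈ primesIco F M n with π ∣ r, K / (Nat.card F : ℝ) ^ π.natDegree := by
  have hfar : Finset.card {π ∈ T | ¬ π.natDegree < n} ≤ L := by
    refine Nat.le_of_mul_le_mul_right ((card_mul_le_natDegree hr fun π hπ => ?_).trans hdeg) hn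
    obtain ⟨hπT, hπn⟩ := Finset.mem_filter.mp hπ
    exact ⟨(hT π hπT).1, (hT π hπT).2.1, not_lt.mp hπn⟩
  rw [← Finset.sum_filter_not_add_sum_filter T (fun π => π.natDegree < n)]
  refine add_le_add ?_ ?_
  · calc _ ≤ ∑ π ∈ T with ¬ π.natDegree < n, K / (Nat.card F : ℝ) ^ n := by
          refine Finset.sum_le_sum fun π hπ => ?_
          rw [min_eq_left (not_lt.mp (Finset.mem_filter.mp hπ).2)]
      _ ≤ L * K / (Nat.card F : ℝ) ^ n := by
          rw [Finset.sum_const, nsmul_eq_mul, mul_div_assoc]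
          gcongr
  · calc _ = ∑ π ∈ T with π.natDegree < n, K / (Nat.card F : ℝ) ^ π.natDegree := by
          refine Finset.sum_congr rfl fun π hπ => ?_
          rw [min_eq_right (Finset.mem_filter.mp hπ).2.le]
      _ ≤ _ := by
          refine Finset.sum_le_sum_of_subset_of_nonneg (fun π hπ => ?_) fun _ _ _ => by positivity
          obtain ⟨hπT, hπn⟩ := Finset.mem_filter.mp hπ
          obtain ⟨hπ, hdvd, hM⟩ := hT π hπT
          exact Finset.mem_filter.mpr ⟨mem_primesIco.mpr ⟨hπ, hM, hπn⟩, hdvd⟩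

open Classical in
theorem proportion_hasLargeCommonPrime_cons_le {N e K L M n : ℕ} (he : 0 < e) (hn : 0 < n)
    {S : Set (MvPolynomial (Fin (N + 1)) F[X])} (hK : ∀ f ∈ S, f.degreeOf 0 * e ≤ K)
    {y : Fin N → F[X]} (hy : ¬ HasLargeCommonPrime (coeffSet S) e M y)
    {r : F[X]} (hr : r ≠ 0) (hdeg : r.natDegree ≤ L * n)
    (hdvd : ∀ π a : F[X], (∀ f ∈ S, π ∣ MvPolynomial.eval (Fin.cons a (y ^ e)) f) → π ∣ r) :
    proportion (fun a : degreeLT F n => HasLargeCommonPrime S e M (Fin.cons (a : F[X]) y)) ≤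
      L * K / (Nat.card F : ℝ) ^ n +
        ∑ π ∈ primesIco F M n with π ∣ r, K / (Nat.card F : ℝ) ^ π.natDegree := by
  set T : Finset F[X] := {π ∈ primesIco F M (r.natDegree + 1) | π ∣ r}
  have mem_T {π : F[X]} : π ∈ T ↔ (π.Monic ∧ Irreducible π) ∧ M ≤ π.natDegree ∧ π ∣ r := by
    rw [Finset.mem_filter, mem_primesIco]
    exact ⟨fun h => ⟨h.1.1, h.1.2.1, h.2⟩,
      fun h => ⟨⟨h.1, h.2.1, Nat.lt_succ_of_le (natDegree_le_of_dvd h.2.2 hr)⟩, h.2.2⟩⟩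
  calc _ ≤ proportion fun a : degreeLT F n => ∃ π ∈ T, ∀ f ∈ S,
          π ∣ MvPolynomial.eval ((Fin.cons (a : F[X]) y : Fin (N + 1) → F[X]) ^ e) f := by
        refine proportion_mono fun a ⟨π, hπ, hM, h⟩ => ⟨π, mem_T.mpr ⟨hπ, hM, ?_⟩, h⟩
        exact hdvd π _ fun f hf => fin_cons_pow (a : F[X]) y e ▸ h f hf
    _ ≤ ∑ π ∈ T, K / (Nat.card F : ℝ) ^ min n π.natDegree := by
        refine (proportion_exists_mem_le _ _).trans (Finset.sum_le_sum fun π hπT => ?_)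
        obtain ⟨hπ, hM, -⟩ := mem_T.mp hπT
        obtain ⟨f, hf, hne⟩ := not_hasLargeCommonPrime_coeffSet hy hπ hM
        calc _ ≤ _ := proportion_mono fun a h => h f hf
          _ ≤ _ := proportion_dvd_eval_cons_pow_le he f hπ.2 hne n
          _ ≤ _ := by gcongr; exact hK f hf
    _ ≤ _ := sum_filter_dvd_div_pow_min_le K.cast_nonneg hn hr hdeg T fun π hπ =>
        have h := mem_T.mp hπ
        ⟨h.1, h.2.2, h.2.1⟩

end Ekedahl

section EkedahlInduction

variable {F : Type*} [Field F]

theorem exists_dvd_eval_pow {N e : ℕ} (he : 0 < e)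
    {S : Set (MvPolynomial (Fin (N + 1)) F[X])} (hS : HasNoCommonFactor S) :
    ∃ r : MvPolynomial (Fin N) F[X], r ≠ 0 ∧ ∀ (π a : F[X]) (y : Fin N → F[X]),
      (∀ f ∈ S, π ∣ MvPolynomial.eval (Fin.cons a (y ^ e)) f) → π ∣ MvPolynomial.eval y r := by
  obtain ⟨h, h0, hdvd⟩ := hS.exists_dvd_eval
  refine ⟨MvPolynomial.expand e h, fun h' => h0 ?_, fun π a y hπ => ?_⟩
  · rwa [MvPolynomial.expand_eq_zero he] at h'
  · rw [MvPolynomial.eval_expand]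
    exact hdvd π a _ hπ

/-- The event `S M` has limiting proportion tending to `0` as `M → ∞`. -/
def IsNegligible {σ : Type*} (S : ℕ → (σ → F[X]) → Prop) : Prop :=
  ∀ ε > 0, ∀ᶠ M in atTop, ∀ᶠ n in atTop, boxProportion n (S M) ≤ ε

theorem isNegligible_hasLargeCommonPrime_zero {e : ℕ} {S : Set (MvPolynomial (Fin 0) F[X])}
    (hS : HasNoCommonFactor S) : IsNegligible (HasLargeCommonPrime S e) := by
  obtain ⟨f, hf, hf0⟩ : ∃ f ∈ S, f ≠ 0 := by
    by_contra! h0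
    obtain ⟨a, ha, h⟩ := hS 0 fun f hf => (h0 f hf).symm ▸ dvd_rfl
    exact ha (MvPolynomial.C_injective _ _ (h.symm.trans (map_zero _).symm))
  obtain ⟨a, rfl⟩ := MvPolynomial.C_surjective (Fin 0) f
  have ha : a ≠ 0 := fun h => hf0 (by rw [h, map_zero])
  intro ε hε
  filter_upwards [eventually_gt_atTop a.natDegree] with M hM
  have hnot (x : Fin 0 → F[X]) : ¬ HasLargeCommonPrime S e M x := fun ⟨π, _, hMπ, h⟩ => by
    have hdvd : π ∣ a := MvPolynomial.eval_C (f := x ^ e) a ▸ h _ hf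
    exact (natDegree_le_of_dvd hdvd ha).not_gt (hM.trans_le hMπ)
  refine .of_forall fun n => ?_
  simpa only [boxProportion, proportion, hnot, Nat.card_of_isEmpty, Nat.cast_zero, zero_div]
    using hε.le

theorem hasLargeCommonPrime_image_rename {σ τ : Type*} (φ : σ → τ) {S : Set (MvPolynomial σ F[X])}
    {e M : ℕ} {x : τ → F[X]} :
    HasLargeCommonPrime (MvPolynomial.rename φ '' S) e M x ↔
      HasLargeCommonPrime S e M (x ∘ φ) := by
  simp only [HasLargeCommonPrime, Set.forall_mem_image, MvPolynomial.eval_rename]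
  rfl

variable [Finite F]

open Classical in
theorem exists_proportion_hasLargeCommonPrime_cons_le {N e : ℕ} (he : 0 < e)
    {S : Set (MvPolynomial (Fin (N + 1)) F[X])} (hSfin : S.Finite) (hS : HasNoCommonFactor S) :
    ∃ r : MvPolynomial (Fin N) F[X], r ≠ 0 ∧ ∃ K L : ℕ, ∀ (M : ℕ), ∀ n > 0,
      ∀ y : Fin N → degreeLT F n,
        proportion (fun a : degreeLT F n =>
            HasLargeCommonPrime S e M (Fin.cons (a : F[X]) fun i => y i)) ≤
          (if HasLargeCommonPrime (coeffSet S) e M fun i => y i then 1 else 0) +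
          (if MvPolynomial.eval (fun i => (y i : F[X])) r = 0 then 1 else 0) +
          L * K / (Nat.card F : ℝ) ^ n +
          ∑ π ∈ primesIco F M n, K / (Nat.card F : ℝ) ^ π.natDegree *
            if π ∣ MvPolynomial.eval (fun i => (y i : F[X])) r then 1 else 0 := by
  obtain ⟨r, hr, hdvd⟩ := exists_dvd_eval_pow he hS
  obtain ⟨K, hK⟩ := (hSfin.image fun f => f.degreeOf 0 * e).bddAbove
  obtain ⟨L, hL⟩ := exists_natDegree_eval_le r
  refine ⟨r, hr, K, L, fun M n hn y => ?_⟩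
  have hsum : 0 ≤ ∑ π ∈ primesIco F M n, K / (Nat.card F : ℝ) ^ π.natDegree *
      if π ∣ MvPolynomial.eval (fun i => (y i : F[X])) r then 1 else 0 := by positivity
  have hconst : 0 ≤ L * K / (Nat.card F : ℝ) ^ n := by positivity
  by_cases hy : HasLargeCommonPrime (coeffSet S) e M fun i => y i
  · refine (proportion_le_one _).trans ?_
    rw [if_pos hy]
    split_ifs <;> linarith
  by_cases hry : MvPolynomial.eval (fun i => (y i : F[X])) r = 0
  · refine (proportion_le_one _).trans ?_
    rw [if_neg hy, if_pos hry]
    linarith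
  have hdeg := hL n hn (fun i => y i) fun i =>
    natDegree_le_of_degree_le (mem_degreeLT.mp (y i).2).le
  have := proportion_hasLargeCommonPrime_cons_le he hn
    (fun f hf => hK (Set.mem_image_of_mem _ hf)) hy hry hdeg fun π a => hdvd π a _
  rw [if_neg hy, if_neg hry, zero_add, zero_add]
  simpa only [Finset.sum_filter, mul_ite, mul_one, mul_zero] using this

theorem sum_primesIco_mul_boxProportion_le {N : ℕ} {r : MvPolynomial (Fin N) F[X]} {M : ℕ}
    (hr : ∀ π : F[X], M ≤ π.natDegree →
      MvPolynomial.map (Ideal.Quotient.mk (Ideal.span {π})) r ≠ 0) {K : ℝ} (hK : 0 ≤ K) (n : ℕ) :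
    ∑ π ∈ primesIco F M n, K / (Nat.card F : ℝ) ^ π.natDegree *
        boxProportion n (fun y => π ∣ MvPolynomial.eval y r) ≤
      2 * (K * r.totalDegree) / (Nat.card F : ℝ) ^ M := by
  set q : ℝ := (Nat.card F : ℝ)
  calc _ ≤ ∑ π ∈ primesIco F M n, K * r.totalDegree * ((q ^ π.natDegree) ^ 2)⁻¹ := by
        refine Finset.sum_le_sum fun π hπ => ?_
        obtain ⟨hπ, hMπ, hπn⟩ := mem_primesIco.mp hπ
        calc _ ≤ K / q ^ π.natDegree * (r.totalDegree / q ^ π.natDegree) := by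
              gcongr
              exact boxProportion_dvd_eval_le hπ.2 (hr π hMπ) hπn.le
          _ = _ := by field_simp
    _ ≤ K * r.totalDegree * (2 / q ^ M) := by
        rw [← Finset.mul_sum]
        gcongr
        exact sum_primesIco_inv_sq_le M n
    _ = _ := by ring

theorem exists_boxProportion_hasLargeCommonPrime_le {N e : ℕ} (he : 0 < e)
    {S : Set (MvPolynomial (Fin (N + 1)) F[X])} (hSfin : S.Finite) (hS : HasNoCommonFactor S) :
    ∃ A : ℝ, ∃ M₀ : ℕ, ∀ M ≥ M₀, ∀ n > 0,
      boxProportion n (HasLargeCommonPrime S e M) ≤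
        boxProportion n (HasLargeCommonPrime (coeffSet S) e M) + A / (Nat.card F : ℝ) ^ n +
          A / (Nat.card F : ℝ) ^ M := by
  classical
  obtain ⟨r, hr, K, L, hfibre⟩ := exists_proportion_hasLargeCommonPrime_cons_le he hSfin hS
  obtain ⟨M₀, hM₀⟩ := exists_forall_map_mk_ne_zero hr
  refine ⟨r.totalDegree + L * K + 2 * (K * r.totalDegree), M₀, fun M hM n hn => ?_⟩
  have := Fintype.ofFinite (degreeLT F n)
  set q : ℝ := (Nat.card F : ℝ)
  calc boxProportion n (HasLargeCommonPrime S e M)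
      ≤ boxProportion n (HasLargeCommonPrime (coeffSet S) e M) +
          boxProportion n (fun y => MvPolynomial.eval y r = 0) + L * K / q ^ n +
          ∑ π ∈ primesIco F M n, K / q ^ π.natDegree *
            boxProportion n (fun y => π ∣ MvPolynomial.eval y r) := by
        rw [boxProportion, proportion_fin_cons]
        have hcons (a : degreeLT F n) (y : Fin N → degreeLT F n) :
            (fun i => ((Fin.cons a y : Fin (N + 1) → degreeLT F n) i : F[X])) =
              Fin.cons (a : F[X]) fun i => y i := by
          ext1 i
          cases i using Fin.cases <;> rfl
        simp only [hcons]
        refine (Finset.expect_le_expect fun y _ => hfibre M n hn y).trans_eq ?_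
        simp only [Finset.expect_add_distrib, Fintype.expect_const, Finset.expect_sum_comm,
          ← Finset.mul_expect, ← proportion_eq_expect, boxProportion]
    _ ≤ boxProportion n (HasLargeCommonPrime (coeffSet S) e M) + r.totalDegree / q ^ n +
          L * K / q ^ n + 2 * (K * r.totalDegree) / q ^ M := by
        gcongr
        · exact boxProportion_eval_eq_zero_le hr n
        · exact sum_primesIco_mul_boxProportion_le (fun π h => hM₀ π (hM.trans h)) K.cast_nonneg n
    _ ≤ _ := by
        have : 0 ≤ 2 * (K * r.totalDegree) / q ^ n := by positivity
        have : 0 ≤ r.totalDegree / q ^ M := by positivity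
        have : 0 ≤ L * K / q ^ M := by positivity
        simp only [add_div]
        linarith

theorem isNegligible_hasLargeCommonPrime_fin {e : ℕ} (he : 0 < e) {N : ℕ}
    {S : Set (MvPolynomial (Fin N) F[X])} (hSfin : S.Finite) (hS : HasNoCommonFactor S) :
    IsNegligible (HasLargeCommonPrime S e) := by
  induction N with
  | zero => exact isNegligible_hasLargeCommonPrime_zero hS
  | succ N ih =>
    obtain ⟨A, M₀, hA⟩ := exists_boxProportion_hasLargeCommonPrime_le he hSfin hS
    have hq : (1 : ℝ) < Nat.card F := by exact_mod_cast Finite.one_lt_card (α := F)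
    have hlim : Tendsto (fun n : ℕ => A / (Nat.card F : ℝ) ^ n) atTop (nhds 0) :=
      tendsto_const_nhds.div_atTop (tendsto_pow_atTop_atTop_of_one_lt hq)
    intro ε hε
    have hsmall := hlim.eventually_le_const (show 0 < ε / 3 by positivity)
    filter_upwards [ih (finite_coeffSet hSfin) hS.coeffSet (ε / 3) (by positivity), hsmall,
      eventually_ge_atTop M₀] with M hcoeff hM hM₀
    filter_upwards [hcoeff, hsmall, eventually_gt_atTop 0] with n hcoeff hn hn0
    linarith [hA M hM₀ n hn0]

theorem isNegligible_hasLargeCommonPrime {σ : Type*} [Finite σ] {e : ℕ} (he : 0 < e)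
    {S : Set (MvPolynomial σ F[X])} (hSfin : S.Finite) (hS : HasNoCommonFactor S) :
    IsNegligible (HasLargeCommonPrime S e) := by
  obtain ⟨N, ⟨φ⟩⟩ := Finite.exists_equiv_fin σ
  have hS' : HasNoCommonFactor (MvPolynomial.renameEquiv F[X] φ '' S) := by
    intro g hg
    obtain ⟨a, ha, h⟩ := hS ((MvPolynomial.renameEquiv F[X] φ).symm g) fun f hf => by
      rw [← map_dvd_iff (MvPolynomial.renameEquiv F[X] φ), AlgEquiv.apply_symm_apply]
      exact hg _ (Set.mem_image_of_mem _ hf)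
    refine ⟨a, ha, ?_⟩
    rw [AlgEquiv.symm_apply_eq] at h
    exact h.trans (MvPolynomial.rename_C _ a)
  intro ε hε
  filter_upwards [isNegligible_hasLargeCommonPrime_fin he (hSfin.image _) hS' ε hε] with M hM
  filter_upwards [hM] with n hn
  rw [← boxProportion_comp_equiv φ]
  exact (boxProportion_mono fun x hx => (hasLargeCommonPrime_image_rename φ).mpr hx).trans hn

end EkedahlInduction

section CoeffDeriv

variable {k R σ : Type*} [CommSemiring k] [CommRing R] [Algebra k R]

theorem coeff_sum_monomial_coeff (d : R →+ R) (f : MvPolynomial σ R) (s : σ →₀ ℕ) :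
    (∑ s ∈ f.support, MvPolynomial.monomial s (d (f.coeff s))).coeff s = d (f.coeff s) := by
  classical
  rw [MvPolynomial.coeff_sum]
  simp only [MvPolynomial.coeff_monomial, Finset.sum_ite_eq', MvPolynomial.mem_support_iff,
    ite_not]
  split_ifs with h
  · rw [h, map_zero]
  · rfl

/-- The derivation of `MvPolynomial σ R` that applies the derivation `d` of `R` to each
coefficient. -/
noncomputable def coeffDeriv (d : Derivation k R R) :
    Derivation k (MvPolynomial σ R) (MvPolynomial σ R) :=
  have coeff_sum (f : MvPolynomial σ R) (s : σ →₀ ℕ) :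
      (∑ s ∈ f.support, MvPolynomial.monomial s (d (f.coeff s))).coeff s = d (f.coeff s) :=
    coeff_sum_monomial_coeff (d : R →+ R) f s
  Derivation.mk'
    { toFun := fun f => ∑ s ∈ f.support, MvPolynomial.monomial s (d (f.coeff s))
      map_add' := fun f g => by
        ext1 s
        rw [MvPolynomial.coeff_add, coeff_sum, coeff_sum, coeff_sum, MvPolynomial.coeff_add,
          map_add]
      map_smul' := fun c f => by
        ext1 s
        rw [coeff_sum, MvPolynomial.coeff_smul, MvPolynomial.coeff_smul, coeff_sum,
          d.map_smul, RingHom.id_apply] }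
    fun f g => by
      classical
      ext1 s
      change (∑ s ∈ (f * g).support, MvPolynomial.monomial s (d ((f * g).coeff s))).coeff s =
        (f * (∑ s ∈ g.support, MvPolynomial.monomial s (d (g.coeff s))) +
          g * (∑ s ∈ f.support, MvPolynomial.monomial s (d (f.coeff s)))).coeff s
      rw [coeff_sum, mul_comm g, MvPolynomial.coeff_add, MvPolynomial.coeff_mul,
        MvPolynomial.coeff_mul, MvPolynomial.coeff_mul, map_sum, ← Finset.sum_add_distrib]
      refine Finset.sum_congr rfl fun x _ => ?_
      rw [coeff_sum, coeff_sum, d.leibniz, smul_eq_mul, smul_eq_mul, mul_comm (g.coeff x.2)]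

theorem coeff_coeffDeriv (d : Derivation k R R) (f : MvPolynomial σ R) (s : σ →₀ ℕ) :
    (coeffDeriv d f).coeff s = d (f.coeff s) :=
  coeff_sum_monomial_coeff (d : R →+ R) f s

theorem coeffDeriv_C (d : Derivation k R R) (a : R) :
    coeffDeriv d (MvPolynomial.C a : MvPolynomial σ R) = MvPolynomial.C (d a) := by
  classical
  ext1 s
  rw [coeff_coeffDeriv, MvPolynomial.coeff_C, MvPolynomial.coeff_C, apply_ite d, map_zero]

theorem coeffDeriv_X (d : Derivation k R R) (i : σ) :
    coeffDeriv d (MvPolynomial.X i : MvPolynomial σ R) = 0 := by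
  classical
  ext1 s
  rw [coeff_coeffDeriv, MvPolynomial.coeff_X, apply_ite d, map_zero, d.map_one_eq_zero, ite_self,
    MvPolynomial.coeff_zero]

theorem derivation_aeval {A : Type*} [CommRing A] [Algebra k A] [Algebra R A] [Fintype σ]
    {d : Derivation k R R} {D : Derivation k A A}
    (hD : ∀ a, D (algebraMap R A a) = algebraMap R A (d a)) (x : σ → A) (f : MvPolynomial σ R) :
    D (MvPolynomial.aeval x f) = MvPolynomial.aeval x (coeffDeriv d f) +
      ∑ j, MvPolynomial.aeval x (MvPolynomial.pderiv j f) * D (x j) := by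
  classical
  induction f using MvPolynomial.induction_on with
  | C a => simp [coeffDeriv_C, hD]
  | add f g hf hg =>
    simp only [map_add, hf, hg, add_mul, Finset.sum_add_distrib]
    ring
  | mul_X f i hf =>
    simp only [map_mul, Derivation.leibniz, smul_eq_mul, map_add, MvPolynomial.aeval_X, hf,
      coeffDeriv_X, mul_zero, zero_add, MvPolynomial.pderiv_X, Pi.single_apply, apply_ite,
      map_zero, add_mul, Finset.sum_add_distrib, mul_one, ite_mul, zero_mul,
      Finset.sum_ite_eq, Finset.mem_univ, if_true]
    rw [mul_add, Finset.mul_sum]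
    simp only [mul_assoc]
    ring

theorem coeffDeriv_rename {τ : Type*} (d : Derivation k R R) (φ : σ → τ)
    (f : MvPolynomial σ R) :
    coeffDeriv d (MvPolynomial.rename φ f) = MvPolynomial.rename φ (coeffDeriv d f) := by
  induction f using MvPolynomial.induction_on with
  | C a => simp only [MvPolynomial.rename_C, coeffDeriv_C]
  | add f g hf hg => simp only [map_add, hf, hg]
  | mul_X f i hf =>
    simp only [map_mul, MvPolynomial.rename_X, Derivation.leibniz, coeffDeriv_X,
      smul_eq_mul, mul_zero, zero_add, hf]

end CoeffDeriv

section Squarefree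

variable {k R σ : Type*} [CommSemiring k] [CommRing R] [Algebra k R]

theorem pderiv_eq_zero_of_dvd [IsDomain R] {g : MvPolynomial σ R} {j : σ}
    (h : g ∣ MvPolynomial.pderiv j g) : MvPolynomial.pderiv j g = 0 := by
  obtain ⟨e, he⟩ := h
  by_contra hne
  have hne' : g * e ≠ 0 := he ▸ hne
  have hdeg := MvPolynomial.totalDegree_mul_of_isDomain (left_ne_zero_of_mul hne')
    (right_ne_zero_of_mul hne')
  obtain ⟨s, hs, hs_deg⟩ := Finset.exists_mem_eq_sup (MvPolynomial.pderiv j g).support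
    (MvPolynomial.support_nonempty.mpr hne) (fun s => s.sum fun _ i => i)
  rw [MvPolynomial.mem_support_iff, MvPolynomial.coeff_pderiv] at hs
  have hle :=
    MvPolynomial.le_totalDegree (MvPolynomial.mem_support_iff.mpr (left_ne_zero_of_mul hs))
  rw [Finsupp.sum_add_index' (fun _ => rfl) (fun _ _ _ => rfl), Finsupp.sum_single_index rfl,
    ← hs_deg, ← MvPolynomial.totalDegree, he, hdeg] at hle
  lia

theorem coeffDeriv_eq_zero_of_dvd [IsDomain R] {d : Derivation k R R}
    (hd : ∀ a, a ∣ d a → d a = 0) {g : MvPolynomial σ R} (h : g ∣ coeffDeriv d g) :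
    coeffDeriv d g = 0 := by
  classical
  obtain ⟨e, he⟩ := h
  by_contra hne
  have hne' : g * e ≠ 0 := he ▸ hne
  have hle : (coeffDeriv d g).totalDegree ≤ g.totalDegree := by
    refine Finset.sup_mono fun s hs => ?_
    rw [MvPolynomial.mem_support_iff, coeff_coeffDeriv] at hs
    exact MvPolynomial.mem_support_iff.mpr fun h0 => hs (by rw [h0, map_zero])
  rw [he, MvPolynomial.totalDegree_mul_of_isDomain (left_ne_zero_of_mul hne')
    (right_ne_zero_of_mul hne')] at hle
  have he_const : e = MvPolynomial.C (e.coeff 0) :=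
    MvPolynomial.totalDegree_eq_zero_iff_eq_C.mp (by lia)
  refine hne (MvPolynomial.ext _ _ fun s => ?_)
  rw [coeff_coeffDeriv, MvPolynomial.coeff_zero]
  refine hd _ ⟨e.coeff 0, ?_⟩
  rw [← coeff_coeffDeriv, he, he_const, mul_comm, MvPolynomial.coeff_C_mul,
    MvPolynomial.coeff_C, if_pos rfl, mul_comm]

theorem dvd_apply_of_pderiv_eq_zero [IsDomain R] (p : ℕ) [CharP R p] {g : MvPolynomial σ R}
    {j : σ} (hg : MvPolynomial.pderiv j g = 0) {s : σ →₀ ℕ} (hs : s ∈ g.support) : p ∣ s j := by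
  classical
  obtain hj | hj := Nat.eq_zero_or_pos (s j)
  · rw [hj]; exact dvd_zero p
  have hs_eq : s - Finsupp.single j 1 + Finsupp.single j 1 = s :=
    tsub_add_cancel_of_le (Finsupp.single_le_iff.mpr hj)
  have hcoeff : g.coeff s * (s j : R) = 0 := by
    have := MvPolynomial.coeff_pderiv (i := j) g (s - Finsupp.single j 1)
    rw [hg, MvPolynomial.coeff_zero, hs_eq, Finsupp.tsub_apply, Finsupp.single_eq_same,
      ← Nat.cast_succ, Nat.succ_eq_add_one, Nat.sub_add_cancel hj] at this
    exact this.symm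
  exact (CharP.cast_eq_zero_iff R p _).mp
    ((mul_eq_zero.mp hcoeff).resolve_left (MvPolynomial.mem_support_iff.mp hs))

theorem exists_pow_eq_of_pderiv_eq_zero [IsDomain R] (p : ℕ) [Fact p.Prime] [CharP R p]
    {g : MvPolynomial σ R} (hcoeff : ∀ s, ∃ b, b ^ p = g.coeff s)
    (hg : ∀ j, MvPolynomial.pderiv j g = 0) : ∃ r, r ^ p = g := by
  choose b hb using hcoeff
  refine ⟨∑ s ∈ g.support, MvPolynomial.monomial
    (s.mapRange (· / p) (Nat.zero_div p)) (b s), ?_⟩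
  rw [sum_pow_char p]
  conv_rhs => rw [g.as_sum]
  refine Finset.sum_congr rfl fun s hs => ?_
  rw [MvPolynomial.monomial_pow, hb]
  have hexp : p • s.mapRange (· / p) (Nat.zero_div p) = s :=
    Finsupp.ext fun j => Nat.mul_div_cancel' (dvd_apply_of_pderiv_eq_zero p (hg j) hs)
  rw [hexp]

theorem exists_pow_eq_of_derivative_eq_zero {F : Type*} [Field F] (p : ℕ) [ExpChar F p]
    [PerfectRing F p] [CharP F p] (hp : p ≠ 0) {a : F[X]} (h : derivative a = 0) : ∃ b, b ^ p = a :=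
  ⟨(contract p a).map (frobeniusEquiv F p).symm, by
    rw [← polynomial_expand_eq, expand_contract p h hp]⟩

theorem exists_eq_C_of_forall_irreducible [IsDomain R] [UniqueFactorizationMonoid R]
    {h : MvPolynomial σ R} (h0 : h ≠ 0)
    (H : ∀ g, Irreducible g → g ∣ h → ∃ a, g = MvPolynomial.C a) :
    ∃ a, h = MvPolynomial.C a := by
  induction h using WfDvdMonoid.induction_on_irreducible with
  | zero => exact absurd rfl h0
  | unit u hu =>
    obtain ⟨a, -, ha⟩ := MvPolynomial.isUnit_iff_eq_C_of_isReduced.mp hu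
    exact ⟨a, ha⟩
  | mul a i ha hi ih =>
    obtain ⟨b, rfl⟩ := ih ha fun g hg hga => H g hg (hga.mul_left i)
    obtain ⟨c, rfl⟩ := H i hi (dvd_mul_right _ _)
    exact ⟨c * b, MvPolynomial.C_mul.symm⟩

theorem exists_eq_C_of_mul_self_dvd {K : Type*} [Field K] [Algebra R K] [FaithfulSMul R K]
    {f g : MvPolynomial σ R} (hf : Squarefree (MvPolynomial.map (algebraMap R K) f))
    (h : g * g ∣ f) : ∃ a, g = MvPolynomial.C a := by
  have hunit : IsUnit (MvPolynomial.map (algebraMap R K) g) :=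
    hf _ (by rw [← map_mul]; exact map_dvd _ h)
  refine ⟨g.coeff 0, MvPolynomial.totalDegree_eq_zero_iff_eq_C.mp ?_⟩
  rw [← (MvPolynomial.isUnit_iff_totalDegree_of_isReduced.mp hunit).2, MvPolynomial.totalDegree,
    MvPolynomial.totalDegree,
    MvPolynomial.support_map_of_injective _ (FaithfulSMul.algebraMap_injective R K)]

theorem dvd_derivation_of_dvd_derivation_mul {A : Type*} [CommRing A] [Algebra k A]
    (D : Derivation k A A) {g e : A} (hg : Prime g) (hge : ¬ g ∣ e) (h : g ∣ D (g * e)) :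
    g ∣ D g := by
  rw [D.leibniz, smul_eq_mul, smul_eq_mul, dvd_add_right (dvd_mul_right g _)] at h
  exact (hg.dvd_or_dvd h).resolve_left hge

theorem exists_eq_C_of_irreducible_of_dvd_derivatives {F : Type*} [Field F] [Finite F] {K : Type*}
    [Field K] [Algebra F[X] K] [FaithfulSMul F[X] K] {f g : MvPolynomial σ F[X]}
    (hf : Squarefree (MvPolynomial.map (algebraMap F[X] K) f)) (hg : Irreducible g) (hgf : g ∣ f)
    (hd : g ∣ coeffDeriv derivative' f) (hpd : ∀ j, g ∣ MvPolynomial.pderiv j f) :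
    ∃ a, g = MvPolynomial.C a := by
  obtain ⟨p, hchar⟩ := CharP.exists F
  have hp : p.Prime := CharP.char_is_prime F p
  have : Fact p.Prime := ⟨hp⟩
  obtain ⟨e, rfl⟩ := hgf
  by_cases hge : g ∣ e
  · exact exists_eq_C_of_mul_self_dvd hf (mul_dvd_mul_left g hge)
  -- All derivatives of `g` vanish, so `g` is a `p`-th power.
  have hcoeff : coeffDeriv derivative' g = 0 :=
    coeffDeriv_eq_zero_of_dvd (fun _ => dvd_derivative_iff.mp)
      (dvd_derivation_of_dvd_derivation_mul _ hg.prime hge hd)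
  have hpderiv (j) : MvPolynomial.pderiv j g = 0 :=
    pderiv_eq_zero_of_dvd (dvd_derivation_of_dvd_derivation_mul _ hg.prime hge (hpd j))
  obtain ⟨r, rfl⟩ := exists_pow_eq_of_pderiv_eq_zero p (fun s =>
    exists_pow_eq_of_derivative_eq_zero p hp.ne_zero
      (by rw [← derivative'_apply, ← coeff_coeffDeriv, hcoeff, MvPolynomial.coeff_zero])) hpderiv
  exact absurd hg (not_irreducible_pow hp.ne_one)

theorem hasNoCommonFactor_derivatives {F : Type*} [Field F] [Finite F] {K : Type*}
    [Field K] [Algebra F[X] K] [FaithfulSMul F[X] K] {f : MvPolynomial σ F[X]}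
    (hf : Squarefree (MvPolynomial.map (algebraMap F[X] K) f)) :
    HasNoCommonFactor
      ({f, coeffDeriv derivative' f} ∪ Set.range fun j => MvPolynomial.pderiv j f) := by
  intro h hS
  have hf0 : f ≠ 0 := by
    rintro rfl
    exact not_squarefree_zero (by rwa [map_zero] at hf)
  have hhf : h ∣ f := hS f (.inl (.inl rfl))
  have h0 : h ≠ 0 := ne_zero_of_dvd_ne_zero hf0 hhf
  obtain ⟨a, rfl⟩ := exists_eq_C_of_forall_irreducible h0 fun g hg hgh =>
    exists_eq_C_of_irreducible_of_dvd_derivatives hf hg (hgh.trans hhf)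
      (hgh.trans (hS _ (.inl (.inr rfl)))) fun j => hgh.trans (hS _ (.inr ⟨j, rfl⟩))
  exact ⟨a, by rintro rfl; exact h0 MvPolynomial.C_0, rfl⟩

end Squarefree

section Shear

variable {R σ τ : Type*} [CommRing R]

theorem aeval_sumElim_aeval_sumElim (c c' : σ → MvPolynomial τ R) (h : c' + c = 0) :
    (MvPolynomial.aeval (Sum.elim (MvPolynomial.X ∘ Sum.inl) fun j =>
        MvPolynomial.X (.inr j) + MvPolynomial.rename .inl (c j))).comp
      (MvPolynomial.aeval (R := R) (Sum.elim (MvPolynomial.X ∘ Sum.inl) fun j =>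
        MvPolynomial.X (.inr j) + MvPolynomial.rename .inl (c' j))) =
      AlgHom.id R (MvPolynomial (τ ⊕ σ) R) := by
  refine MvPolynomial.algHom_ext ?_
  rintro (i | j)
  · simp
  · rw [AlgHom.comp_apply, MvPolynomial.aeval_X, Sum.elim_inr, map_add, MvPolynomial.aeval_X,
      Sum.elim_inr, MvPolynomial.aeval_rename, Sum.elim_comp_inl, ← MvPolynomial.rename_eq_aeval,
      eq_neg_of_add_eq_zero_left (congrFun h j : c' j + c j = 0), map_neg, add_neg_cancel_right,
      AlgHom.id_apply]

/-- The change of variables of `MvPolynomial (τ ⊕ σ) R` that translates the variable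
`X (inr j)` by the polynomial `c j` in the variables `X (inl _)`, which are fixed. -/
noncomputable def shear (c : σ → MvPolynomial τ R) :
    MvPolynomial (τ ⊕ σ) R ≃ₐ[R] MvPolynomial (τ ⊕ σ) R :=
  AlgEquiv.ofAlgHom _ _ (aeval_sumElim_aeval_sumElim c (-c) (neg_add_cancel c))
    (aeval_sumElim_aeval_sumElim (-c) c (add_neg_cancel c))

theorem shear_rename_inl (c : σ → MvPolynomial τ R) (g : MvPolynomial τ R) :
    shear c (MvPolynomial.rename .inl g) = MvPolynomial.rename .inl g := by
  rw [shear, AlgEquiv.ofAlgHom_apply, MvPolynomial.aeval_rename, Sum.elim_comp_inl,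
    MvPolynomial.rename_eq_aeval]

theorem shear_rename_inr (c : σ → MvPolynomial τ R) (f : MvPolynomial σ R) :
    shear c (MvPolynomial.rename .inr f) = MvPolynomial.aeval
      (fun j => MvPolynomial.X (.inr j) + MvPolynomial.rename .inl (c j)) f := by
  rw [shear, AlgEquiv.ofAlgHom_apply, MvPolynomial.aeval_rename, Sum.elim_comp_inr]

variable {k : Type*} [CommSemiring k] [Algebra k R]

theorem coeffDeriv_shear_rename_inr [Fintype σ] (d : Derivation k R R)
    (c : σ → MvPolynomial τ R) (f : MvPolynomial σ R) :
    coeffDeriv d (shear c (MvPolynomial.rename .inr f)) =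
      shear c (MvPolynomial.rename .inr (coeffDeriv d f) +
        ∑ j, MvPolynomial.rename .inr (MvPolynomial.pderiv j f) *
          MvPolynomial.rename .inl (coeffDeriv d (c j))) := by
  rw [shear_rename_inr, derivation_aeval (coeffDeriv_C d)]
  simp only [map_add, map_sum, map_mul, shear_rename_inl, shear_rename_inr, coeffDeriv_X,
    coeffDeriv_rename, zero_add]

theorem sumAlgEquiv_rename_inr (f : MvPolynomial σ R) :
    MvPolynomial.sumAlgEquiv R τ σ (MvPolynomial.rename .inr f) = MvPolynomial.C f :=
  DFunLike.congr_fun (MvPolynomial.sumAlgEquiv_comp_rename_inr R τ σ) f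

theorem sumAlgEquiv_rename_inl (g : MvPolynomial τ R) :
    MvPolynomial.sumAlgEquiv R τ σ (MvPolynomial.rename .inl g) =
      MvPolynomial.map MvPolynomial.C g :=
  DFunLike.congr_fun (MvPolynomial.sumAlgEquiv_comp_rename_inl R τ σ) g

open Classical in
theorem hasNoCommonFactor_shear [IsDomain R] [Finite σ] {d : Derivation k R R}
    {c : σ → MvPolynomial τ R} (e : σ → τ →₀ ℕ) (he : ∀ j, e j ≠ 0)
    (hc_zero : ∀ j, (coeffDeriv d (c j)).coeff 0 = 0)
    (hc : ∀ i j, (coeffDeriv d (c j)).coeff (e i) = if j = i then 1 else 0)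
    {f : MvPolynomial σ R}
    (hf : HasNoCommonFactor ({f, coeffDeriv d f} ∪ Set.range fun j => MvPolynomial.pderiv j f)) :
    HasNoCommonFactor {shear c (MvPolynomial.rename .inr f),
      coeffDeriv d (shear c (MvPolynomial.rename .inr f))} := by
  intro h hS
  have := Fintype.ofFinite σ
  have hf0 : f ≠ 0 := by
    rintro rfl
    obtain ⟨a, ha, h0⟩ := hf 0 (by simp)
    exact ha (MvPolynomial.C_eq_zero.mp h0.symm)
  let E := (shear c).symm.trans (MvPolynomial.sumAlgEquiv R τ σ)
  have hE (g) (hg : h ∣ shear c g) : E h ∣ MvPolynomial.sumAlgEquiv R τ σ g := by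
    rwa [← map_dvd_iff E.symm, AlgEquiv.symm_apply_apply,
      AlgEquiv.symm_trans_apply, AlgEquiv.symm_symm, AlgEquiv.symm_apply_apply]
  have hEf := hE _ (hS _ (.inl rfl))
  have hEdf := hE _ (coeffDeriv_shear_rename_inr d c f ▸ hS _ (.inr rfl))
  rw [sumAlgEquiv_rename_inr, MvPolynomial.dvd_C_iff_exists hf0] at hEf
  obtain ⟨g, hgf, hg⟩ := hEf
  rw [hg, MvPolynomial.C_dvd_iff_dvd_coeff] at hEdf
  have hcoeff (s) : g ∣ (MvPolynomial.C (coeffDeriv d f) : MvPolynomial τ _).coeff s +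
      ∑ j, MvPolynomial.pderiv j f * MvPolynomial.C ((coeffDeriv d (c j)).coeff s) := by
    simpa only [map_add, map_sum, map_mul, sumAlgEquiv_rename_inr, sumAlgEquiv_rename_inl,
      MvPolynomial.coeff_add, MvPolynomial.coeff_sum, MvPolynomial.coeff_C_mul,
      MvPolynomial.coeff_map] using hEdf s
  -- The coefficient at `0` is `∂ f`, the coefficient at `e i` is `∂ᵢ f`.
  obtain ⟨a, ha, rfl⟩ := hf g <| by
    rintro _ ((rfl | rfl) | ⟨i, rfl⟩)
    · exact hgf
    · simpa [hc_zero] using hcoeff 0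
    · simpa [hc, MvPolynomial.coeff_C, (he i).symm] using hcoeff (e i)
  refine ⟨a, ha, ?_⟩
  exact E.injective (hg.trans (E.commutes a).symm)

end Shear

section PowerSubstitution

variable {F ι : Type*} [Field F] {d : ℕ}

theorem exists_eq_sum_X_pow_mul_pow [Finite F] (p : ℕ) [Fact p.Prime] [CharP F p] {n : ℕ}
    {x : F[X]} (hx : x.degree < (n * p : ℕ)) :
    ∃ y : Fin p → degreeLT F n, x = ∑ i : Fin p, X ^ (i : ℕ) * (y i : F[X]) ^ p := by
  have hroot (i : Fin p) : (∑ l : Fin n,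
      C ((frobeniusEquiv F p).symm (x.coeff (i + p * l))) * X ^ (l : ℕ)) ^ p =
      ∑ l : Fin n, C (x.coeff (i + p * l)) * X ^ (p * (l : ℕ)) := by
    rw [sum_pow_char p]
    refine Finset.sum_congr rfl fun l _ => ?_
    rw [mul_pow, ← C_pow, frobeniusEquiv_symm_pow_p, ← pow_mul, mul_comm p]
  refine ⟨fun i => ⟨∑ l : Fin n, C ((frobeniusEquiv F p).symm (x.coeff (i + p * l))) * X ^ (l : ℕ),
    mem_degreeLT.mpr (degree_sum_fin_lt _)⟩, ?_⟩
  calc x = ∑ k : Fin (n * p), C (x.coeff k) * X ^ (k : ℕ) := by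
        rw [Fin.sum_univ_eq_sum_range (fun k => C (x.coeff k) * X ^ k)]
        ext k
        rw [finsetSum_coeff]
        simp only [coeff_C_mul_X_pow, Finset.sum_ite_eq, Finset.mem_range]
        split_ifs with hk
        · rfl
        · exact coeff_eq_zero_of_degree_lt (hx.trans_le (by exact_mod_cast not_lt.mp hk))
    _ = ∑ l : Fin n, ∑ i : Fin p, X ^ (i : ℕ) * (C (x.coeff (i + p * l)) * X ^ (p * (l : ℕ))) := by
        rw [← Fintype.sum_prod_type', ← finProdFinEquiv.sum_comp]
        refine Fintype.sum_congr _ _ fun ⟨l, i⟩ => ?_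
        rw [finProdFinEquiv_apply_val, pow_add]
        ring
    _ = _ := by
        rw [Finset.sum_comm]
        simp only [hroot, Finset.mul_sum]

/-- The tuple `x` with entries `x j = ∑ i ≤ d, X ^ i * u_{i, j}`, where `u_{0, j} = u (inr j)` and
`u_{i + 1, j} = u (inl (j, i))`. -/
noncomputable def combine (u : ι × Fin d ⊕ ι → F[X]) (j : ι) : F[X] :=
  u (.inr j) + ∑ i : Fin d, X ^ (i.1 + 1) * u (.inl (j, i))

theorem exists_eq_combine_pow [Finite F] [Fact (d + 1).Prime] [CharP F (d + 1)] {n n' : ℕ}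
    (hn : n ≤ n' * (d + 1)) (x : ι → degreeLT F n) :
    ∃ y : ι × Fin d ⊕ ι → degreeLT F n',
      (fun j => (x j : F[X])) = combine fun i => (y i : F[X]) ^ (d + 1) := by
  choose y hy using fun j => exists_eq_sum_X_pow_mul_pow (d + 1)
    ((mem_degreeLT.mp (x j).2).trans_le (by exact_mod_cast hn))
  refine ⟨Sum.elim (fun a => y a.1 a.2.succ) fun j => y j 0, funext fun j => ?_⟩
  rw [hy j, Fin.sum_univ_succ, combine, Fin.val_zero, pow_zero, one_mul]
  rfl

/-- The part of positive degree in `X` of the `j`-th entry of `combine`. -/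
noncomputable def shift (F : Type*) [Field F] (d : ℕ) (j : ι) : MvPolynomial (ι × Fin d) F[X] :=
  ∑ i : Fin d, MvPolynomial.C (X ^ (i.1 + 1)) * MvPolynomial.X (j, i)

theorem eval_shear_shift (u : ι × Fin d ⊕ ι → F[X]) (f : MvPolynomial ι F[X]) :
    MvPolynomial.eval u (shear (shift F d) (MvPolynomial.rename .inr f)) =
      MvPolynomial.eval (combine u) f := by
  rw [shear_rename_inr, ← MvPolynomial.coe_aeval_eq_eval, ← MvPolynomial.coe_aeval_eq_eval,
    RingHom.coe_coe, RingHom.coe_coe, MvPolynomial.comp_aeval_apply]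
  congr 2
  ext1 j
  rw [combine, shift, map_add, MvPolynomial.aeval_X, MvPolynomial.aeval_rename, map_sum]
  simp only [map_mul, MvPolynomial.aeval_X, MvPolynomial.aeval_C, Algebra.algebraMap_self,
    RingHom.id_apply, Function.comp_apply]

theorem derivative_eval_of_derivative_eq_zero {σ : Type*} {u : σ → F[X]}
    (hu : ∀ i, derivative (u i) = 0) (f : MvPolynomial σ F[X]) :
    derivative (MvPolynomial.eval u f) = MvPolynomial.eval u (coeffDeriv derivative' f) := by
  induction f using MvPolynomial.induction_on with
  | C a => simp only [MvPolynomial.eval_C, coeffDeriv_C, derivative'_apply]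
  | add f g hf hg => simp only [map_add, hf, hg]
  | mul_X f i hf =>
    simp only [map_mul, MvPolynomial.eval_X, Derivation.leibniz, coeffDeriv_X,
      smul_eq_mul, derivative_mul, hf, hu, mul_zero, zero_add, add_zero]
    exact mul_comm _ _

theorem coeffDeriv_shift (j : ι) :
    coeffDeriv derivative' (shift F d j) =
      ∑ i : Fin d, MvPolynomial.C (derivative (X ^ (i.1 + 1))) * MvPolynomial.X (j, i) := by
  rw [shift, map_sum]
  refine Finset.sum_congr rfl fun i _ => ?_
  rw [Derivation.leibniz, coeffDeriv_X, smul_zero, zero_add, coeffDeriv_C, derivative'_apply,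
    smul_eq_mul, mul_comm]

theorem coeff_zero_coeffDeriv_shift (j : ι) :
    (coeffDeriv derivative' (shift F d j)).coeff 0 = 0 := by
  simp only [coeffDeriv_shift, MvPolynomial.coeff_sum, MvPolynomial.coeff_C_mul,
    MvPolynomial.coeff_zero_X, mul_zero, Finset.sum_const_zero]

open Classical in
theorem coeff_single_coeffDeriv_shift [NeZero d] (i j : ι) :
    (coeffDeriv derivative' (shift F d j)).coeff (Finsupp.single (i, 0) 1) =
      if j = i then 1 else 0 := by
  simp only [coeffDeriv_shift, MvPolynomial.coeff_sum, MvPolynomial.coeff_C_mul,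
    MvPolynomial.coeff_X, Finsupp.single_left_inj one_ne_zero, Prod.mk.injEq, ite_and]
  split_ifs
  · rw [Fintype.sum_eq_single 0 fun i hi => by rw [if_neg hi, mul_zero]]
    simp
  · simp

theorem hasNoCommonFactor_shear_shift [Finite F] [Finite ι] [NeZero d] {K : Type*}
    [Field K] [Algebra F[X] K] [FaithfulSMul F[X] K] {f : MvPolynomial ι F[X]}
    (hf : Squarefree (MvPolynomial.map (algebraMap F[X] K) f)) :
    HasNoCommonFactor {shear (shift F d) (MvPolynomial.rename .inr f),
      coeffDeriv derivative' (shear (shift F d) (MvPolynomial.rename .inr f))} :=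
  hasNoCommonFactor_shear (fun j => Finsupp.single (j, 0) 1) (by simp) coeff_zero_coeffDeriv_shift
    coeff_single_coeffDeriv_shift (hasNoCommonFactor_derivatives hf)

end PowerSubstitution

section Transfer

variable {F ι : Type*} [Field F]

/-- `π ^ 2` divides the value of `f` at `x` for some monic irreducible `π` of degree at least
`M`. -/
def HasLargeSqFactor (f : MvPolynomial ι F[X]) (M : ℕ) (x : ι → F[X]) : Prop :=
  ∃ π : F[X], (π.Monic ∧ Irreducible π) ∧ M ≤ π.natDegree ∧ π ^ 2 ∣ MvPolynomial.eval x f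

theorem natCard_pi_degreeLT_div_le [Finite ι] [Finite F] (d n : ℕ) :
    (Nat.card (ι × Fin d ⊕ ι → degreeLT F (n / (d + 1) + 1)) : ℝ) / Nat.card (ι → degreeLT F n) ≤
      (Nat.card F : ℝ) ^ ((d + 1) * Nat.card ι) := by
  have hF : (1 : ℝ) ≤ Nat.card F := Nat.one_le_cast.mpr Nat.card_pos
  have : (0 : ℝ) < Nat.card F := zero_lt_one.trans_le hF
  rw [Nat.card_fun, Nat.card_fun, natCard_degreeLT, natCard_degreeLT, Nat.card_sum, Nat.card_prod,
    Nat.card_fin, div_le_iff₀ (by push_cast; positivity)]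
  push_cast
  rw [← pow_mul, ← pow_mul, ← pow_add]
  refine pow_le_pow_right₀ hF ?_
  calc (n / (d + 1) + 1) * (Nat.card ι * d + Nat.card ι)
      = (n / (d + 1) * (d + 1) + (d + 1)) * Nat.card ι := by ring
    _ ≤ (n + (d + 1)) * Nat.card ι := by gcongr; exact Nat.div_mul_le_self n (d + 1)
    _ = (d + 1) * Nat.card ι + n * Nat.card ι := by ring

theorem boxProportion_le_mul_combine_pow [Finite F] [Finite ι] {d : ℕ} [Fact (d + 1).Prime]
    [CharP F (d + 1)] (n : ℕ) (p : (ι → F[X]) → Prop) :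
    boxProportion n p ≤ (Nat.card F : ℝ) ^ ((d + 1) * Nat.card ι) *
      boxProportion (n / (d + 1) + 1) fun y : ι × Fin d ⊕ ι → F[X] =>
        p (combine (y ^ (d + 1))) := by
  have hn : n ≤ (n / (d + 1) + 1) * (d + 1) := by
    rw [add_mul, one_mul]
    exact (Nat.lt_div_mul_add d.succ_pos).le
  choose g hg using exists_eq_combine_pow (F := F) (ι := ι) hn
  have hinj : Function.Injective g := fun x x' h => by
    have hx : (fun j => (x j : F[X])) = fun j => (x' j : F[X]) := by rw [hg x, hg x', h]
    exact funext fun j => Subtype.ext (congrFun hx j)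
  let r (y : ι × Fin d ⊕ ι → degreeLT F (n / (d + 1) + 1)) : Prop :=
    p (combine ((fun i => (y i : F[X])) ^ (d + 1)))
  have himp (x : ι → degreeLT F n) (hx : p fun j => x j) : r (g x) := by
    rw [hg x] at hx
    exact hx
  refine (proportion_le_mul_of_injective hinj himp).trans ?_
  exact mul_le_mul_of_nonneg_right (natCard_pi_degreeLT_div_le d n) (proportion_nonneg _)

theorem dvd_derivative_of_sq_dvd {R : Type*} [CommRing R] {f g : R[X]} (h : f ^ 2 ∣ g) :
    f ∣ derivative g := by
  obtain ⟨a, rfl⟩ := h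
  rw [sq, mul_assoc, derivative_mul, derivative_mul]
  exact ⟨derivative f * a + (derivative f * a + f * derivative a), by ring⟩

theorem hasLargeCommonPrime_of_sq_dvd {d : ℕ} [CharP F (d + 1)]
    {f : MvPolynomial ι F[X]} {M : ℕ} {y : ι × Fin d ⊕ ι → F[X]}
    (h : HasLargeSqFactor f M (combine (y ^ (d + 1)))) :
    HasLargeCommonPrime {shear (shift F d) (MvPolynomial.rename .inr f),
      coeffDeriv derivative' (shear (shift F d) (MvPolynomial.rename .inr f))} (d + 1) M y := by
  obtain ⟨π, hπ, hM, hdvd⟩ := h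
  refine ⟨π, hπ, hM, ?_⟩
  rw [← eval_shear_shift] at hdvd
  have hderiv (i) : derivative ((y ^ (d + 1)) i) = 0 := by
    rw [Pi.pow_apply, derivative_pow, CharP.cast_eq_zero, C_0, zero_mul, zero_mul]
  rintro _ (rfl | rfl)
  · exact (dvd_pow_self π two_ne_zero).trans hdvd
  · rw [← derivative_eval_of_derivative_eq_zero hderiv]
    exact dvd_derivative_of_sq_dvd hdvd

theorem isNegligible_hasLargeSqFactor [Finite F] [Finite ι] {K : Type*} [Field K] [Algebra F[X] K]
    [FaithfulSMul F[X] K] {f : MvPolynomial ι F[X]}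
    (hf : Squarefree (MvPolynomial.map (algebraMap F[X] K) f)) :
    IsNegligible (HasLargeSqFactor f) := by
  obtain ⟨p, hchar⟩ := CharP.exists F
  have hp : p.Prime := CharP.char_is_prime F p
  obtain ⟨d, rfl⟩ : ∃ d, p = d + 1 := ⟨p - 1, (Nat.sub_add_cancel hp.one_le).symm⟩
  have : NeZero d := ⟨fun h => Nat.not_prime_one (by rwa [h] at hp)⟩
  have : Fact (d + 1).Prime := ⟨hp⟩
  have hneg := isNegligible_hasLargeCommonPrime d.succ_pos (by simp)
    (hasNoCommonFactor_shear_shift (d := d) hf)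
  intro ε hε
  have hA : 0 < (Nat.card F : ℝ) ^ ((d + 1) * Nat.card ι) := by
    have : 0 < Nat.card F := Nat.card_pos
    positivity
  filter_upwards [hneg (ε / (Nat.card F : ℝ) ^ ((d + 1) * Nat.card ι)) (div_pos hε hA)] with M hM
  have htend : Tendsto (fun n => n / (d + 1) + 1) atTop atTop :=
    (tendsto_add_atTop_nat 1).comp (Nat.tendsto_div_const_atTop d.succ_ne_zero)
  filter_upwards [htend.eventually hM] with n hn
  calc boxProportion n (HasLargeSqFactor f M)
      ≤ _ := boxProportion_le_mul_combine_pow (d := d) n _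
    _ ≤ (Nat.card F : ℝ) ^ ((d + 1) * Nat.card ι) *
        (ε / (Nat.card F : ℝ) ^ ((d + 1) * Nat.card ι)) := by
      refine mul_le_mul_of_nonneg_left (le_trans ?_ hn) hA.le
      exact boxProportion_mono fun _ => hasLargeCommonPrime_of_sq_dvd
    _ = ε := mul_div_cancel₀ _ hA.ne'

end Transfer

section LocalDensities

theorem multipliable_of_nonneg_of_le_one {κ : Type*} {g : κ → ℝ} (h0 : ∀ k, 0 ≤ g k)
    (h1 : ∀ k, g k ≤ 1) : Multipliable g := by
  refine ⟨⨅ T : Finset κ, ∏ k ∈ T, g k, ?_⟩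
  rw [HasProd, SummationFilter.unconditional_filter]
  exact tendsto_atTop_ciInf (Finset.prod_anti_set_of_le_one h0 h1)
    ⟨0, Set.forall_mem_range.mpr fun T => Finset.prod_nonneg fun k _ => h0 k⟩

theorem le_prod_of_hasProd {κ : Type*} {g : κ → ℝ} (h0 : ∀ k, 0 ≤ g k) (h1 : ∀ k, g k ≤ 1) {L : ℝ}
    (hg : HasProd g L) (T : Finset κ) : L ≤ ∏ k ∈ T, g k := by
  rw [HasProd, SummationFilter.unconditional_filter] at hg
  exact (Finset.prod_anti_set_of_le_one h0 h1).le_of_tendsto hg T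

variable {F ι : Type*} [Field F]

/-- The number of zeros of `f` modulo `π ^ 2`, denoted by `c_π` in the paper. -/
noncomputable def cardZerosModSq (f : MvPolynomial ι F[X]) (π : F[X]) : ℕ :=
  Nat.card {z : ι → F[X] ⧸ Ideal.span {π ^ 2} //
    MvPolynomial.eval z (MvPolynomial.map (Ideal.Quotient.mk (Ideal.span {π ^ 2})) f) = 0}

/-- The Euler factor at `π`: the density of the tuples at which the value of `f` is not divisible
by `π ^ 2`. -/
noncomputable def localFactor (f : MvPolynomial ι F[X]) (π : F[X]) : ℝ :=
  1 - cardZerosModSq f π / (Nat.card F : ℝ) ^ (2 * Nat.card ι * π.natDegree)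

/-- No square of a monic irreducible polynomial outside `P` divides `a`. -/
def SquarefreeAway (P : Set F[X]) (a : F[X]) : Prop :=
  ∀ π : F[X], π.Monic → Irreducible π → π ∉ P → ¬ π ^ 2 ∣ a

variable [Finite F] [Finite ι]

theorem localFactor_eq_proportion (f : MvPolynomial ι F[X]) {π : F[X]} (hπ : π ≠ 0) :
    localFactor f π = proportion fun z : ι → F[X] ⧸ Ideal.span {π ^ 2} =>
      ¬ MvPolynomial.eval z (MvPolynomial.map (Ideal.Quotient.mk (Ideal.span {π ^ 2})) f) = 0 := by
  have := finite_quotient_span (pow_ne_zero 2 hπ)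
  rw [proportion_not, localFactor, cardZerosModSq, proportion, Nat.card_fun,
    natCard_quotient_span (pow_ne_zero 2 hπ), natDegree_pow, ← pow_mul, Nat.cast_pow,
    mul_right_comm]

theorem localFactor_nonneg (f : MvPolynomial ι F[X]) {π : F[X]} (hπ : π ≠ 0) :
    0 ≤ localFactor f π := by
  rw [localFactor_eq_proportion f hπ]
  exact proportion_nonneg _

theorem localFactor_le_one (f : MvPolynomial ι F[X]) {π : F[X]} (hπ : π ≠ 0) :
    localFactor f π ≤ 1 := by
  have := finite_quotient_span (pow_ne_zero 2 hπ)
  rw [localFactor_eq_proportion f hπ]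
  exact proportion_le_one _

theorem boxProportion_forall_not_sq_dvd (f : MvPolynomial ι F[X]) {T : Finset F[X]}
    (hT : ∀ π ∈ T, π.Monic ∧ Irreducible π) {n : ℕ} (hn : (∏ π ∈ T, π ^ 2).natDegree ≤ n) :
    boxProportion n (fun x => ∀ π ∈ T, ¬ π ^ 2 ∣ MvPolynomial.eval x f) =
      ∏ π ∈ T, localFactor f π := by
  have hT' (π : T) : (π : F[X]).Monic ∧ Irreducible (π : F[X]) := hT π π.2
  have hcop : Pairwise fun π ρ : T => IsCoprime ((π : F[X]) ^ 2) ((ρ : F[X]) ^ 2) :=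
    fun π ρ h => (isCoprime_of_monic_of_irreducible (hT' π).1 (hT' π).2 (hT' ρ).1 (hT' ρ).2
      (Subtype.val_injective.ne h)).pow
  rw [← Finset.prod_coe_sort] at hn ⊢
  simp only [dvd_mvPolynomial_eval_iff, localFactor_eq_proportion f (hT' _).2.ne_zero,
    Subtype.forall' (p := (· ∈ T))]
  exact boxProportion_forall_mk (fun π => pow_ne_zero 2 (hT' π).2.ne_zero) hcop hn
    fun π z => ¬ MvPolynomial.eval z (MvPolynomial.map (Ideal.Quotient.mk _) f) = 0

end LocalDensities

section Density

variable {F ι : Type*} [Field F] [Finite F] [Finite ι] {f : MvPolynomial ι F[X]} {P : Set F[X]}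

theorem boxProportion_squarefreeAway_le {T : Finset F[X]}
    (hT : ∀ π ∈ T, π.Monic ∧ Irreducible π ∧ π ∉ P) {n : ℕ}
    (hn : (∏ π ∈ T, π ^ 2).natDegree ≤ n) :
    boxProportion n (fun x => SquarefreeAway P (MvPolynomial.eval x f)) ≤
      ∏ π ∈ T, localFactor f π := by
  rw [← boxProportion_forall_not_sq_dvd f (fun π hπ => ⟨(hT π hπ).1, (hT π hπ).2.1⟩) hn]
  exact boxProportion_mono fun x hx π hπ =>
    hx π (hT π hπ).1 (hT π hπ).2.1 (hT π hπ).2.2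

open Classical in
theorem prod_primesIco_localFactor_le {M n : ℕ}
    (hn : (∏ π ∈ primesIco F 0 M with π ∉ P, π ^ 2).natDegree ≤ n) :
    ∏ π ∈ primesIco F 0 M with π ∉ P, localFactor f π ≤
      boxProportion n (fun x => SquarefreeAway P (MvPolynomial.eval x f)) +
        boxProportion n (HasLargeSqFactor f M) := by
  rw [← boxProportion_forall_not_sq_dvd f
    (fun π hπ => (mem_primesIco.mp (Finset.mem_filter.mp hπ).1).1) hn]
  refine (boxProportion_mono fun x hx => ?_).trans (boxProportion_or_le n _ _)
  refine or_iff_not_imp_right.mpr fun hx' π hmonic hirr hP hdvd => ?_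
  obtain hπ | hπ := le_or_gt M π.natDegree
  · exact hx' ⟨π, ⟨hmonic, hirr⟩, hπ, hdvd⟩
  · exact hx π (Finset.mem_filter.mpr
      ⟨mem_primesIco.mpr ⟨⟨hmonic, hirr⟩, π.natDegree.zero_le, hπ⟩, hP⟩) hdvd

theorem tendsto_boxProportion_squarefreeAway (hf : IsNegligible (HasLargeSqFactor f)) {L : ℝ}
    (hL : HasProd (fun π : {π : F[X] // π.Monic ∧ Irreducible π ∧ π ∉ P} => localFactor f π) L) :
    Tendsto (fun n => boxProportion n fun x => SquarefreeAway P (MvPolynomial.eval x f)) atTop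
      (nhds L) := by
  classical
  refine tendsto_order.mpr ⟨fun a ha => ?_, fun b hb => ?_⟩
  · obtain ⟨M, hM⟩ := (hf ((L - a) / 2) (by linarith)).exists
    have hLM : L ≤ ∏ π ∈ primesIco F 0 M with π ∉ P, localFactor f π := by
      have := le_prod_of_hasProd (fun π => localFactor_nonneg f π.2.1.ne_zero)
        (fun π => localFactor_le_one f π.2.1.ne_zero) hL ((primesIco F 0 M).subtype _)
      rwa [Finset.prod_subtype_eq_prod_filter, Finset.filter_congr fun π hπ =>
        (by simp [(mem_primesIco.mp hπ).1] : _ ↔ π ∉ P)] at this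
    filter_upwards [hM, eventually_ge_atTop
      (∏ π ∈ primesIco F 0 M with π ∉ P, π ^ 2).natDegree] with n hlarge hn
    linarith [prod_primesIco_localFactor_le (f := f) hn]
  · rw [HasProd, SummationFilter.unconditional_filter] at hL
    obtain ⟨T, hT⟩ := (hL.eventually_lt_const hb).exists
    have hT' : ∏ π ∈ T.map (.subtype _), localFactor f π < b := by rwa [Finset.prod_map]
    filter_upwards [eventually_ge_atTop _] with n hn
    refine (boxProportion_squarefreeAway_le (fun π hπ => ?_) hn).trans_lt hT'
    obtain ⟨ρ, -, rfl⟩ := Finset.mem_map.mp hπ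
    exact ρ.2

end Density

end SquarefreeSieve

open SquarefreeSieve in
theorem stmt_12_general {F ι : Type*} [Field F] [Finite F] [Finite ι] (f : MvPolynomial ι F[X])
    (hf : Squarefree (MvPolynomial.map (algebraMap F[X] (RatFunc F)) f)) (P : Set F[X]) :
    Multipliable (fun π : {π : F[X] // π.Monic ∧ Irreducible π ∧ π ∉ P} => localFactor f π) ∧
      Tendsto
        (fun n : ℕ => (Nat.card {x : ι → F[X] //
          (∀ i, (x i).degree < n) ∧ SquarefreeAway P (MvPolynomial.eval x f)} : ℝ) /
            (Nat.card F : ℝ) ^ (n * Nat.card ι))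
        atTop
        (nhds (∏' π : {π : F[X] // π.Monic ∧ Irreducible π ∧ π ∉ P}, localFactor f π)) := by
  have hmul : Multipliable
      (fun π : {π : F[X] // π.Monic ∧ Irreducible π ∧ π ∉ P} => localFactor f π) :=
    multipliable_of_nonneg_of_le_one (fun π => localFactor_nonneg f π.2.1.ne_zero)
      fun π => localFactor_le_one f π.2.1.ne_zero
  refine ⟨hmul, ?_⟩
  simp only [← boxProportion_eq_natCard_div]
  exact tendsto_boxProportion_squarefreeAway (isNegligible_hasLargeSqFactor hf) hmul.hasProd

/-- Proposition 3.3 (Poonen's squarefree sieve over `𝔽_q[t]`): for `f` squarefree over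
`𝔽_q(t)` in `m` variables and a finite set `P` of monic irreducibles, the density of
`m`-tuples `x` of polynomials with `f(x)` squarefree away from `P` exists and equals
`∏_{π ∉ P} (1 - c_π/q^{2m·deg π})`. -/
theorem stmt_12 (q : ℕ) (Fq : Type) [Field Fq] [Fintype Fq] (hcard : Fintype.card Fq = q)
    (m : ℕ) (hm : 1 ≤ m)
    (f : MvPolynomial (Fin m) (Polynomial Fq))
    (hsqf : Squarefree (MvPolynomial.map (algebraMap (Polynomial Fq) (RatFunc Fq)) f))
    (P : Finset (Polynomial Fq)) (hP : ∀ π ∈ P, π.Monic ∧ Irreducible π)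
    (c : Polynomial Fq → ℕ)
    (hc : ∀ π : Polynomial Fq,
      c π = Nat.card {x : Fin m → Polynomial Fq ⧸ Ideal.span {π ^ 2} //
        MvPolynomial.eval x
          (MvPolynomial.map (Ideal.Quotient.mk (Ideal.span {π ^ 2})) f) = 0}) :
    Multipliable (fun π : {π : Polynomial Fq // π.Monic ∧ Irreducible π ∧ π ∉ P} =>
      (1 - (c (π : Polynomial Fq) : ℝ) / (q : ℝ) ^ (2 * m * (π : Polynomial Fq).natDegree))) ∧
    Tendsto
      (fun n : ℕ =>
        (Nat.card {x : Fin m → Polynomial Fq //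
          (∀ i, (x i).degree < (n : ℕ)) ∧
          ∀ π : Polynomial Fq, π.Monic → Irreducible π → π ∉ P →
            ¬ (π ^ 2 ∣ MvPolynomial.eval x f)} : ℝ) / (q : ℝ) ^ (n * m))
      atTop
      (nhds (∏' π : {π : Polynomial Fq // π.Monic ∧ Irreducible π ∧ π ∉ P},
        (1 - (c (π : Polynomial Fq) : ℝ) /
          (q : ℝ) ^ (2 * m * (π : Polynomial Fq).natDegree)))) := by
  obtain rfl : c = SquarefreeSieve.cardZerosModSq f := funext hc
  have h := stmt_12_general f hsqf P
  simp only [SquarefreeSieve.localFactor, Nat.card_eq_fintype_card, hcard, Fintype.card_fin] at h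
  exact h
end
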